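/- arXiv:1902.04496 — 3 statements merged into one kernel-verified Lean document; each statement's English description precedes it below -/
import Mathlib

section
/- Let v ≥ 2 and let T be a simple graph on v vertices that is a tree (connected with no cycles; equivalently connected with v−1 edges). Then for every real y ≥ 1, trace( (L(P_v) + vy·I)^{−1} ) ≤ trace( (L(T) + vy·I)^{−1} ), where P_v is the path graph on v vertices and L(·) denotes the Laplacian matrix (both matrices are positive definite, hence invertible, for y > 0). -/
noncomputable instance (n : ℕ) : DecidableRel (SimpleGraph.pathGraph n).Adj :=
  Classical.decRel _

/-!
Write `L(G) + z I = (z + 2) I - S` with `S = 2 I - L(G)`, and expand the trace of the inverse into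
four Neumann terms plus the exact remainder `trace (S⁴ (L(G) + z I)⁻¹)`, which lies between `0`
and `trace (S⁴) / z`. For a tree on `n` vertices the four terms depend, apart from `n` and `z`,
only on the excess `∑ (d - 1) (d - 2) (z + 2 - d)` over the degrees `d`. On the path the excess
vanishes and `trace (S⁴) ≤ 6 n`, so the path loses at most `6 n / z`; a tree with a vertex of
degree at least `3` has excess at least `2 (z - 1) ≥ 6 n / z`, and a tree without such a
vertex is the path.
-/

open Matrix Finset SimpleGraph

section Resolvent

variable {n R : Type*} [DecidableEq n]

theorem posDef_of_posSemidef_sub_smul_one {N : Matrix n n ℝ} {z : ℝ} (hz : 0 < z)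
    (hN : (N - z • 1).PosSemidef) : N.PosDef := by
  simpa using PosDef.posSemidef_add hN (PosDef.one.smul hz)

variable [Fintype n]

theorem pow_mul_trace_inv_smul_one_sub [CommRing R] {S : Matrix n n R} {c : R}
    (h : IsUnit (c • 1 - S)) (k : ℕ) :
    c ^ k * trace (c • 1 - S)⁻¹ =
      ∑ j ∈ range k, c ^ (k - 1 - j) * trace (S ^ j) + trace (S ^ k * (c • 1 - S)⁻¹) := by
  have hc : Commute S (c • 1) := (Commute.one_right S).smul_right c
  have geom : (c • 1 - S) * ∑ j ∈ range k, c ^ (k - 1 - j) • S ^ j = c ^ k • 1 - S ^ k := by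
    simpa [smul_pow] using hc.mul_neg_geom_sum₂ k
  have hinv : (c • 1 - S)⁻¹ * (c • 1 - S) = 1 :=
    nonsing_inv_mul _ ((isUnit_iff_isUnit_det _).1 h)
  have htrace := congrArg (fun M ↦ trace ((c • 1 - S)⁻¹ * M)) geom
  simp only [← mul_assoc, hinv, one_mul, mul_sub, Matrix.mul_smul, mul_one, trace_sub, trace_smul,
    trace_sum, smul_eq_mul, trace_mul_comm _ (S ^ k)] at htrace
  linear_combination -htrace

theorem trace_even_pow_mul_nonneg [CommRing R] [PartialOrder R] [IsOrderedAddMonoid R] [StarRing R]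
    {S X : Matrix n n R} (hS : S.IsHermitian) (hX : X.PosSemidef) {k : ℕ} (hk : Even k) :
    0 ≤ trace (S ^ k * X) := by
  obtain ⟨m, rfl⟩ := hk
  have h := (hX.conjTranspose_mul_mul_same (S ^ m)).trace_nonneg
  rwa [(hS.pow m).eq, trace_mul_comm, ← mul_assoc, ← pow_add] at h

theorem posSemidef_one_sub_smul_inv {N : Matrix n n ℝ} {z : ℝ} (hz : 0 < z)
    (hN : (N - z • 1).PosSemidef) : (1 - z • N⁻¹).PosSemidef := by
  have hpos := posDef_of_posSemidef_sub_smul_one hz hN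
  have hdet : IsUnit N.det := (isUnit_iff_isUnit_det _).1 hpos.isUnit
  have key : 1 - z • N⁻¹ = N⁻¹ᴴ * ((N - z • 1) ^ 2 + z • (N - z • 1)) * N⁻¹ := by
    have hfactor : (N - z • 1) ^ 2 + z • (N - z • 1) = N * (N - z • 1) := by
      simp only [sq, sub_mul, smul_mul_assoc, one_mul, sub_add_cancel]
    rw [hpos.inv.isHermitian.eq, hfactor, nonsing_inv_mul_cancel_left _ _ hdet, sub_mul,
      mul_nonsing_inv _ hdet, smul_mul_assoc, one_mul]
  rw [key]
  exact ((hN.pow 2).add (hN.smul hz.le)).conjTranspose_mul_mul_same _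

theorem mul_trace_even_pow_mul_inv_le {S N : Matrix n n ℝ} {z : ℝ} (hS : S.IsHermitian)
    (hz : 0 < z) (hN : (N - z • 1).PosSemidef) {k : ℕ} (hk : Even k) :
    z * trace (S ^ k * N⁻¹) ≤ trace (S ^ k) := by
  have h := trace_even_pow_mul_nonneg hS (posSemidef_one_sub_smul_inv hz hN) hk
  rw [mul_sub, mul_one, Matrix.mul_smul, trace_sub, trace_smul, smul_eq_mul] at h
  linarith

end Resolvent

theorem trace_mul_self_le {n : Type*} [Fintype n] {B : Matrix n n ℝ} {a s : ℝ} (hB : B.IsSymm)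
    (hdiag : ∀ i, B i i = a) (hrow : ∀ i, ∑ j, B i j = s)
    (hoff : ∀ i j, i ≠ j → B i j ∈ Set.Icc 0 1) :
    trace (B * B) ≤ Fintype.card n * (a ^ 2 + (s - a)) := by
  classical
  have hsq (i : n) : ∑ j, B i j * B i j ≤ a ^ 2 + (s - a) := by
    rw [← hrow i, ← add_sum_erase _ _ (mem_univ i), ← add_sum_erase _ (B i) (mem_univ i), hdiag,
      ← sq, add_sub_cancel_left]
    gcongr with j hj
    obtain ⟨h0, h1⟩ := hoff i j (ne_of_mem_erase hj).symm
    exact mul_le_of_le_one_left h0 h1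
  calc trace (B * B) = ∑ i, ∑ j, B i j * B i j := by
        simp only [trace, diag_apply, mul_apply, hB.apply]
    _ ≤ ∑ _i : n, (a ^ 2 + (s - a)) := sum_le_sum fun i _ ↦ hsq i
    _ = Fintype.card n * (a ^ 2 + (s - a)) := by
        rw [sum_const, card_univ, nsmul_eq_mul]

section WeightedLoops

variable {V R : Type*} [Fintype V] [DecidableEq V] [CommRing R]
  (G : SimpleGraph V) [DecidableRel G.Adj] (w : V → R)

theorem adjMatrix_add_diagonal_sq_apply_self (i : V) :
    ((G.adjMatrix R + diagonal w) ^ 2) i i = w i ^ 2 + G.degree i := by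
  rw [sq, add_mul, mul_add, mul_add, diagonal_mul_diagonal]
  simp only [Matrix.add_apply, G.adjMatrix_mul_self_apply_self, mul_diagonal, diagonal_mul,
    diagonal_apply_eq, adjMatrix_apply, G.irrefl, if_false]
  ring

theorem adjMatrix_add_diagonal_sq_apply_of_ne {i j : V} (h : i ≠ j) :
    ((G.adjMatrix R + diagonal w) ^ 2) i j =
      Fintype.card (G.commonNeighbors i j) + (w i + w j) * G.adjMatrix R i j := by
  have hwalk : (G.adjMatrix R * G.adjMatrix R) i j = Fintype.card (G.commonNeighbors i j) := by
    rw [← sq, G.adjMatrix_pow_apply_eq_card_walk]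
    exact congrArg _ (Fintype.card_congr (G.walkLengthTwoEquivCommonNeighbors i j))
  rw [sq, add_mul, mul_add, mul_add, diagonal_mul_diagonal]
  simp only [Matrix.add_apply, hwalk, mul_diagonal, diagonal_mul, diagonal_apply_ne _ h]
  ring

theorem trace_adjMatrix_add_diagonal : trace (G.adjMatrix R + diagonal w) = ∑ i, w i := by
  rw [trace_add, SimpleGraph.trace_adjMatrix, zero_add, trace_diagonal]

theorem trace_adjMatrix_add_diagonal_sq :
    trace ((G.adjMatrix R + diagonal w) ^ 2) = ∑ i, (w i ^ 2 + G.degree i) :=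
  sum_congr rfl fun i _ ↦ adjMatrix_add_diagonal_sq_apply_self G w i

theorem trace_adjMatrix_add_diagonal_cube :
    trace ((G.adjMatrix R + diagonal w) ^ 3) =
      ∑ i, (w i ^ 3 + 3 * w i * G.degree i) + trace (G.adjMatrix R ^ 3) := by
  set A := G.adjMatrix R with hA
  set D := diagonal w with hD
  have expand : (A + D) ^ 3 = D * D * D + (D * D * A + D * A * D + A * (D * D))
      + (D * (A * A) + A * D * A + A * A * D) + A ^ 3 := by noncomm_ring
  have hDAD : trace (D * A * D) = trace (D * D * A) := by rw [trace_mul_comm, mul_assoc]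
  have hADA : trace (A * D * A) = trace (D * (A * A)) := by
    rw [mul_assoc, trace_mul_comm, mul_assoc]
  have hDDA : trace (D * D * A) = 0 := by
    simp only [hA, hD, diagonal_mul_diagonal, trace, diag_apply, diagonal_mul,
      adjMatrix_apply, G.irrefl, if_false, mul_zero, sum_const_zero]
  have hDAA : trace (D * (A * A)) = ∑ i, w i * G.degree i := by
    simp only [hA, hD, trace, diag_apply, diagonal_mul, G.adjMatrix_mul_self_apply_self]
  have hDDD : trace (D * D * D) = ∑ i, w i ^ 3 := by
    simp only [hD, diagonal_mul_diagonal, trace_diagonal, pow_three']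
  rw [expand]
  simp only [trace_add, hDAD, trace_mul_comm A (D * D), hADA, trace_mul_comm (A * A) D, hDDA,
    hDAA, hDDD, sum_add_distrib]
  simp only [mul_assoc, ← mul_sum]
  ring

variable {G} in
theorem trace_adjMatrix_pow_eq_zero_of_odd (hG : G.IsBipartite) {k : ℕ} (hk : Odd k) :
    trace (G.adjMatrix R ^ k) = 0 := by
  refine sum_eq_zero fun i _ ↦ ?_
  rw [diag_apply, G.adjMatrix_pow_apply_eq_card_walk]
  have : IsEmpty {p : G.Walk i i | p.length = k} := ⟨fun ⟨p, hp⟩ ↦ Nat.not_even_iff_odd.2 hk <|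
    hp ▸ two_colorable_iff_forall_loop_even.1 hG i p⟩
  rw [Fintype.card_eq_zero, Nat.cast_zero]

end WeightedLoops

section GraphFacts

variable {V : Type*} {G : SimpleGraph V}

theorem commonNeighbors_subsingleton_of_isAcyclic (hG : G.IsAcyclic) {i j : V} (hij : i ≠ j) :
    (G.commonNeighbors i j).Subsingleton := by
  intro a ha b hb
  rw [mem_commonNeighbors] at ha hb
  have isPath_via {c : V} (hic : G.Adj i c) (hcj : G.Adj c j) :
      (Walk.cons hic hcj.toWalk).IsPath := by
    simp [hic.ne, hcj.ne, hij]
  have hpath := (hG.subsingleton_path i j).elim ⟨_, isPath_via ha.1 ha.2.symm⟩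
    ⟨_, isPath_via hb.1 hb.2.symm⟩
  simpa using congrArg (fun p : G.Path i j ↦ p.1.support) hpath

theorem commonNeighbors_eq_empty_of_isAcyclic (hG : G.IsAcyclic) {i j : V} (hij : G.Adj i j) :
    G.commonNeighbors i j = ∅ := by
  classical
  refine Set.eq_empty_of_forall_notMem fun k ⟨hik, hjk⟩ ↦ ?_
  exact hG.cliqueFree le_rfl {i, j, k} (is3Clique_triple_iff.2 ⟨hij, hik, hjk⟩)

theorem card_le_degree_of_forall_adj {s : Finset V} {i : V} [Fintype (G.neighborSet i)]
    (h : ∀ j ∈ s, G.Adj i j) : #s ≤ G.degree i :=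
  card_le_card fun j hj ↦ (G.mem_neighborFinset i j).2 (h j hj)

theorem three_le_degree_add_degree_of_adj [Fintype V] [DecidableRel G.Adj] (hG : G.Connected)
    (hV : 3 ≤ Fintype.card V) {i j : V} (hij : G.Adj i j) : 3 ≤ G.degree i + G.degree j := by
  classical
  obtain ⟨k, hk⟩ : ∃ k, k ∉ ({i, j} : Finset V) := by
    by_contra! h
    have := card_le_two (a := i) (b := j)
    rw [eq_univ_of_forall h, card_univ] at this
    omega
  obtain ⟨p⟩ := hG.preconnected i k
  obtain ⟨⟨⟨a, b⟩, hab⟩, -, ha, hb⟩ :=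
    p.exists_boundary_dart ({i, j} : Set V) (by simp) (by simpa using hk)
  have hi := (G.degree_pos_iff_exists_adj i).2 ⟨j, hij⟩
  have hj := (G.degree_pos_iff_exists_adj j).2 ⟨i, hij.symm⟩
  have two_le {x y z : V} (hxy : G.Adj x y) (hxz : G.Adj x z) (hyz : y ≠ z) : 2 ≤ G.degree x := by
    rw [← card_pair hyz]
    exact card_le_degree_of_forall_adj (by simp [hxy, hxz])
  simp only [Set.mem_insert_iff, Set.mem_singleton_iff, not_or] at ha hb
  rcases ha with rfl | rfl
  · have := two_le hij hab (Ne.symm hb.2)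
    omega
  · have := two_le hij.symm hab (Ne.symm hb.1)
    omega

theorem isTree_pathGraph (n : ℕ) : (pathGraph (n + 1)).IsTree := by
  refine isTree_iff_connected_and_card.2 ⟨pathGraph_connected n, le_antisymm ?_
    (pathGraph_connected n).card_vert_le_card_edgeSet_add_one⟩
  let edge (i : Fin n) : (pathGraph (n + 1)).edgeSet :=
    ⟨s(i.castSucc, i.succ), pathGraph_adj.2 (by simp)⟩
  have exists_edge_eq {i j : Fin (n + 1)} (hij : i.val + 1 = j.val) :
      ∃ k, (edge k).1 = s(i, j) :=
    ⟨⟨i, by omega⟩, by simp [edge, Fin.ext_iff, ← hij]⟩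
  have edge_surjective : edge.Surjective := by
    rintro ⟨e, he⟩
    induction e with | h i j
    simp only [Subtype.ext_iff]
    rcases pathGraph_adj.1 he with h | h
    · exact exists_edge_eq h
    · rw [Sym2.eq_swap]
      exact exists_edge_eq h
  simpa using Nat.card_le_card_of_surjective edge edge_surjective

theorem degree_pathGraph_le_two {n : ℕ} [DecidableRel (pathGraph n).Adj] (i : Fin n) :
    (pathGraph n).degree i ≤ 2 := by
  rw [← card_neighborFinset_eq_degree, ← card_map Fin.valEmbedding]
  refine (card_le_card fun k hk ↦ ?_).trans (card_le_two (a := i.val - 1) (b := i.val + 1))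
  simp only [mem_map, mem_neighborFinset, pathGraph_adj, mem_insert, mem_singleton,
    Fin.valEmbedding_apply] at hk ⊢
  omega

theorem mem_support_of_adj_start_of_longest {u v w : V} {p : G.Walk u v} (hp : p.IsPath)
    (hmax : ∀ (u' v' : V) (q : G.Walk u' v'), q.IsPath → q.length ≤ p.length) (h : G.Adj u w) :
    w ∈ p.support := by
  by_contra hw
  have := hmax _ _ _ (hp.cons hw (h := h.symm))
  simp at this

theorem three_le_degree_getVert {u v w : V} {p : G.Walk u v} (hp : p.IsPath) {i : ℕ} (h0 : i ≠ 0)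
    (hi : i < p.length) (hadj : G.Adj (p.getVert i) w) (hw : w ∉ p.support)
    [Fintype (G.neighborSet (p.getVert i))] : 3 ≤ G.degree (p.getVert i) := by
  classical
  have hprev := p.adj_getVert_succ (i := i - 1) (by omega)
  rw [Nat.sub_add_cancel (Nat.one_le_iff_ne_zero.2 h0)] at hprev
  have hne : p.getVert (i - 1) ≠ p.getVert (i + 1) := fun h ↦ by
    have := hp.getVert_injOn (Set.mem_ofPred.2 (by omega)) (Set.mem_ofPred.2 (by omega)) h
    omega
  rw [← card_eq_three.2 ⟨_, _, w, hne, ne_of_mem_of_not_mem (p.getVert_mem_support _) hw,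
    ne_of_mem_of_not_mem (p.getVert_mem_support _) hw, rfl⟩]
  exact card_le_degree_of_forall_adj (by simp [hprev.symm, p.adj_getVert_succ hi, hadj])

theorem exists_isHamiltonian_of_degree_le_two [Fintype V] [DecidableEq V] [DecidableRel G.Adj]
    (hG : G.Connected) (hdeg : ∀ i, G.degree i ≤ 2) :
    ∃ (u v : V) (p : G.Walk u v), p.IsHamiltonian := by
  have := hG.nonempty
  obtain ⟨u, v, p, hp, hmax⟩ := Walk.exists_isPath_forall_isPath_length_le_length G
  refine ⟨u, v, p, hp.isHamiltonian_of_mem fun w ↦ ?_⟩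
  by_contra hw
  obtain ⟨q⟩ := hG.preconnected u w
  obtain ⟨⟨⟨a, b⟩, hab⟩, -, ha, hb⟩ :=
    q.exists_boundary_dart {x | x ∈ p.support} p.start_mem_support hw
  obtain ⟨i, rfl, hi⟩ := Walk.mem_support_iff_exists_getVert.1 ha
  rcases eq_or_ne i 0 with rfl | h0
  · rw [p.getVert_zero] at hab
    exact hb (mem_support_of_adj_start_of_longest hp hmax hab)
  rcases hi.eq_or_lt with rfl | hlt
  · rw [p.getVert_length] at hab
    refine hb ?_
    simpa using mem_support_of_adj_start_of_longest hp.reverse (by simpa using hmax) hab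
  · exact absurd (three_le_degree_getVert hp h0 hlt hab hb) (by have := hdeg (p.getVert i); omega)

theorem nonempty_iso_of_bijective_hom {W : Type*} {T : SimpleGraph W} (hG : G.Connected)
    (hT : T.IsTree) (f : G →g T) (hf : Function.Bijective f) : Nonempty (G ≃g T) := by
  let e := Equiv.ofBijective f hf
  have hle : G.map e.toEmbedding ≤ T := by
    rw [map_le_iff_le_comap]
    exact fun a b h ↦ f.map_adj h
  have hconn : (G.map e.toEmbedding).Connected := (Iso.map e G).connected_iff.1 hG
  have heq := hle.antisymm ((isTree_iff_minimal_connected.1 hT).2 hconn hle)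
  exact ⟨heq ▸ Iso.map e G⟩

theorem nonempty_pathGraph_iso [Fintype V] [DecidableRel G.Adj] (hG : G.IsTree)
    (hdeg : ∀ i, G.degree i ≤ 2) : Nonempty (pathGraph (Fintype.card V) ≃g G) := by
  classical
  obtain ⟨u, v, p, hp⟩ := exists_isHamiltonian_of_degree_le_two hG.connected hdeg
  rw [← hp.length_support, p.length_support]
  refine nonempty_iso_of_bijective_hom (pathGraph_connected _) hG hp.isPath.pathGraphCopy.toHom ?_
  refine (Fintype.bijective_iff_injective_and_card _).2 ⟨hp.isPath.pathGraphCopy.injective, ?_⟩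
  rw [Fintype.card_fin, ← p.length_support, hp.length_support]

end GraphFacts

section BranchingExcess

variable {V : Type*} [Fintype V] {G : SimpleGraph V} [DecidableRel G.Adj] {z : ℝ}

variable (G z) in
/-- The shape-dependent part of the first four Neumann terms of `trace ((L(G) + z I)⁻¹)` for a
tree `G`, scaled by `(z + 2) ^ 4`; vertices of degree `1` and `2` do not contribute. -/
def branchingExcess : ℝ :=
  ∑ i, ((G.degree i : ℝ) - 1) * (G.degree i - 2) * (z + 2 - G.degree i)

theorem branchingExcess_eq_zero (hdeg : ∀ i, G.degree i ∈ Set.Icc 1 2) :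
    branchingExcess G z = 0 := by
  refine sum_eq_zero fun i _ ↦ ?_
  obtain ⟨h1, h2⟩ := hdeg i
  interval_cases G.degree i <;> norm_num

theorem two_mul_sub_one_le_mul_mul {d z : ℝ} (hd : 3 ≤ d) (hdz : d ≤ z) :
    2 * (z - 1) ≤ (d - 1) * (d - 2) * (z + 2 - d) := by
  obtain ⟨s, hs, rfl⟩ : ∃ s, 0 ≤ s ∧ d = 3 + s := ⟨d - 3, by linarith, by ring⟩
  obtain ⟨t, ht, rfl⟩ : ∃ t, 0 ≤ t ∧ z = 3 + s + t := ⟨z - (3 + s), by linarith, by ring⟩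
  have : 0 ≤ s ^ 2 * t + 3 * s * t + 2 * s ^ 2 + 4 * s := by positivity
  linarith

theorem two_mul_sub_one_le_branchingExcess (hz : ∀ i, 3 ≤ G.degree i → (G.degree i : ℝ) ≤ z)
    {i : V} (hi : 3 ≤ G.degree i) : 2 * (z - 1) ≤ branchingExcess G z := by
  have hz3 : 3 ≤ z := le_trans (mod_cast hi) (hz i hi)
  have hlarge (j : V) (hj : 3 ≤ G.degree j) := two_mul_sub_one_le_mul_mul (mod_cast hj) (hz j hj)
  have hnonneg (j : V) :
      0 ≤ ((G.degree j : ℝ) - 1) * (G.degree j - 2) * (z + 2 - G.degree j) := by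
    rcases le_or_gt 3 (G.degree j) with hj | hj
    · exact le_trans (by linarith) (hlarge j hj)
    · interval_cases G.degree j
      · norm_num
        linarith
      all_goals norm_num
  exact (hlarge i hi).trans <| single_le_sum
    (f := fun j ↦ ((G.degree j : ℝ) - 1) * (G.degree j - 2) * (z + 2 - G.degree j))
    (fun j _ ↦ hnonneg j) (mem_univ i)

theorem branching_bounds_of_card_le {i : V} (hi : 3 ≤ G.degree i) {n : ℕ}
    (hn : Fintype.card V = n) (hz : n ≤ z) : G.degree i ≤ z ∧ 3 * n ≤ z * (z - 1) := by
  have hlt : G.degree i < n := hn ▸ G.degree_lt_card_verts i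
  have hdeg : (G.degree i : ℝ) ≤ n := mod_cast hlt.le
  have hn4 : (4 : ℝ) ≤ n := mod_cast by omega
  exact ⟨hdeg.trans hz, by nlinarith⟩

theorem sum_two_sub_degree (hG : G.IsTree) : ∑ i, (2 - (G.degree i : ℝ)) = 2 := by
  classical
  have hdegrees : ∑ i, G.degree i + 2 = Fintype.card V * 2 := by
    rw [G.sum_degrees_eq_twice_card_edges, ← hG.card_edgeFinset]
    ring
  rw [sum_sub_distrib, sum_const, card_univ, nsmul_eq_mul, sub_eq_iff_eq_add']
  exact_mod_cast hdegrees.symm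

end BranchingExcess

section LaplacianResolvent

variable {V W : Type*} [Fintype V] [Fintype W] [DecidableEq V] [DecidableEq W]
  {G : SimpleGraph V} [DecidableRel G.Adj] {z : ℝ}

variable (G z) in
/-- The quantity `trace ((L(G) + z I)⁻¹)` compared in the theorem, where `z` is `v y`. -/
noncomputable def lapResolventTrace : ℝ :=
  trace (G.lapMatrix ℝ + z • (1 : Matrix V V ℝ))⁻¹

variable (G) in
/-- The matrix `2 I - L(G)`, seen as a weighted adjacency matrix: every edge has weight `1` and
every vertex carries a loop of weight `2 - degree`, so that all rows sum to `2`. -/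
def loopedAdjMatrix : Matrix V V ℝ :=
  G.adjMatrix ℝ + diagonal fun i ↦ 2 - (G.degree i : ℝ)

/-- The first four Neumann terms of `trace ((L(T) + z I)⁻¹)` for a path `T` on `n` vertices,
scaled by `(z + 2) ^ 4`. -/
def pathBaseline (n : ℕ) (z : ℝ) : ℝ :=
  (z + 2) ^ 3 * n + 2 * (z + 2) ^ 2 + 2 * (z + 2) * n + 8

theorem lapResolventTrace_congr {H : SimpleGraph W} [DecidableRel H.Adj] (e : G ≃g H) :
    lapResolventTrace G z = lapResolventTrace H z := by
  have hlap : G.lapMatrix ℝ + z • 1 = (H.lapMatrix ℝ + z • 1).submatrix e.toEquiv e.toEquiv := by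
    ext i j
    simp [lapMatrix, degMatrix, diagonal_apply, one_apply, e.map_adj_iff, e.degree_eq]
  rw [lapResolventTrace, hlap, inv_submatrix_equiv]
  exact e.toEquiv.sum_comp fun i ↦ (H.lapMatrix ℝ + z • 1)⁻¹ i i

theorem lapMatrix_add_smul_one : G.lapMatrix ℝ + z • 1 = (z + 2) • 1 - loopedAdjMatrix G := by
  ext i j
  obtain rfl | hij := eq_or_ne i j
  · simp [lapMatrix, degMatrix, loopedAdjMatrix]
    ring
  · simp [lapMatrix, degMatrix, loopedAdjMatrix, hij]

theorem posDef_lapMatrix_add_smul_one (hz : 0 < z) : (G.lapMatrix ℝ + z • 1).PosDef :=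
  posDef_of_posSemidef_sub_smul_one hz (by simpa using posSemidef_lapMatrix ℝ G)

variable (G) in
theorem isHermitian_loopedAdjMatrix : (loopedAdjMatrix G).IsHermitian :=
  (G.isHermitian_adjMatrix ℝ).add (isHermitian_diagonal _)

theorem loopedAdjMatrix_mulVec_one : loopedAdjMatrix G *ᵥ 1 = (2 : ℝ) • 1 := by
  ext i
  simp [loopedAdjMatrix, add_mulVec, mulVec_diagonal]

theorem sum_loopedAdjMatrix_sq_apply (i : V) : ∑ j, (loopedAdjMatrix G ^ 2) i j = 4 := by
  have h : (loopedAdjMatrix G ^ 2) *ᵥ 1 = (2 : ℝ) • (2 : ℝ) • 1 := by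
    rw [sq, ← mulVec_mulVec, loopedAdjMatrix_mulVec_one, mulVec_smul, loopedAdjMatrix_mulVec_one]
  have hi := congrFun h i
  norm_num [mulVec, dotProduct] at hi
  exact hi

theorem sum_neumann_loopedAdjMatrix (hG : G.IsTree) :
    ∑ j ∈ range 4, (z + 2) ^ (4 - 1 - j) * trace (loopedAdjMatrix G ^ j) =
      pathBaseline (Fintype.card V) z + branchingExcess G z := by
  have hcube : trace (G.adjMatrix ℝ ^ 3) = 0 :=
    trace_adjMatrix_pow_eq_zero_of_odd hG.isBipartite (by decide)
  calc
    _ = ∑ i, ((z + 2) ^ 3 + (z + 2) ^ 2 * (2 - (G.degree i : ℝ))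
          + (z + 2) * ((2 - (G.degree i : ℝ)) ^ 2 + G.degree i)
          + ((2 - (G.degree i : ℝ)) ^ 3 + 3 * (2 - (G.degree i : ℝ)) * G.degree i)) := by
      simp only [sum_range_succ, range_zero, sum_empty, pow_zero, pow_one, trace_one,
        loopedAdjMatrix, trace_adjMatrix_add_diagonal, trace_adjMatrix_add_diagonal_sq,
        trace_adjMatrix_add_diagonal_cube, hcube, sum_add_distrib, ← mul_sum, sum_const,
        card_univ, nsmul_eq_mul]
      ring
    _ = ∑ i, ((z + 2) ^ 3 + 2 * (z + 2) + ((z + 2) ^ 2 + 4) * (2 - (G.degree i : ℝ))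
          + ((G.degree i : ℝ) - 1) * (G.degree i - 2) * (z + 2 - G.degree i)) :=
      sum_congr rfl fun i _ ↦ by ring
    _ = pathBaseline (Fintype.card V) z + branchingExcess G z := by
      rw [sum_add_distrib, sum_add_distrib, ← mul_sum, sum_two_sub_degree hG, sum_const, card_univ,
        nsmul_eq_mul, pathBaseline, branchingExcess]
      ring

theorem pow_mul_lapResolventTrace (hG : G.IsTree) (hz : 0 < z) :
    (z + 2) ^ 4 * lapResolventTrace G z = pathBaseline (Fintype.card V) z + branchingExcess G z +
      trace (loopedAdjMatrix G ^ 4 * (G.lapMatrix ℝ + z • 1)⁻¹) := by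
  have hunit := (posDef_lapMatrix_add_smul_one (G := G) hz).isUnit
  rw [lapMatrix_add_smul_one] at hunit
  rw [lapResolventTrace, ← sum_neumann_loopedAdjMatrix hG, lapMatrix_add_smul_one]
  exact pow_mul_trace_inv_smul_one_sub hunit 4

theorem loopedAdjMatrix_sq_apply_mem_Icc (hG : G.IsTree) (hdeg : ∀ i, G.degree i ≤ 2)
    (hV : 3 ≤ Fintype.card V) {i j : V} (hij : i ≠ j) :
    (loopedAdjMatrix G ^ 2) i j ∈ Set.Icc (0 : ℝ) 1 := by
  rw [loopedAdjMatrix, adjMatrix_add_diagonal_sq_apply_of_ne G _ hij, adjMatrix_apply]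
  split_ifs with hadj
  · have hcommon : Fintype.card (G.commonNeighbors i j) = 0 := by
      simp [commonNeighbors_eq_empty_of_isAcyclic hG.isAcyclic hadj]
    have hsum : (3 : ℝ) ≤ G.degree i + G.degree j :=
      mod_cast three_le_degree_add_degree_of_adj hG.connected hV hadj
    have hi : (G.degree i : ℝ) ≤ 2 := mod_cast hdeg i
    have hj : (G.degree j : ℝ) ≤ 2 := mod_cast hdeg j
    rw [hcommon]
    constructor <;> push_cast <;> linarith
  · have hcommon : Fintype.card (G.commonNeighbors i j) ≤ 1 := by
      rw [Fintype.card_le_one_iff_subsingleton, Set.subsingleton_coe]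
      exact commonNeighbors_subsingleton_of_isAcyclic hG.isAcyclic hij
    rw [mul_zero, add_zero]
    exact ⟨Nat.cast_nonneg _, mod_cast hcommon⟩

theorem trace_loopedAdjMatrix_pow_four_le (hG : G.IsTree) (hdeg : ∀ i, G.degree i ∈ Set.Icc 1 2)
    (hV : 3 ≤ Fintype.card V) : trace (loopedAdjMatrix G ^ 4) ≤ (6 * Fintype.card V : ℝ) := by
  have hdiag (i : V) : (loopedAdjMatrix G ^ 2) i i = 2 := by
    obtain ⟨h1, h2⟩ := hdeg i
    rw [loopedAdjMatrix, adjMatrix_add_diagonal_sq_apply_self]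
    interval_cases G.degree i <;> norm_num
  have hsymm : (loopedAdjMatrix G ^ 2).IsSymm := by
    rw [IsSymm, ← conjTranspose_eq_transpose_of_trivial]
    exact (isHermitian_loopedAdjMatrix G).pow 2
  have h := trace_mul_self_le hsymm hdiag sum_loopedAdjMatrix_sq_apply
    fun _ _ ↦ loopedAdjMatrix_sq_apply_mem_Icc hG (fun i ↦ (hdeg i).2) hV
  rw [← pow_add] at h
  exact h.trans_eq (by ring)

theorem pow_mul_lapResolventTrace_le (hG : G.IsTree) (hdeg : ∀ i, G.degree i ≤ 2)
    (hV : 3 ≤ Fintype.card V) (hz : 0 < z) :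
    (z + 2) ^ 4 * lapResolventTrace G z ≤
      pathBaseline (Fintype.card V) z + 6 * Fintype.card V / z := by
  have : Nontrivial V := Fintype.one_lt_card_iff_nontrivial.1 (by omega)
  have hdegIcc (i : V) : G.degree i ∈ Set.Icc 1 2 :=
    ⟨hG.connected.preconnected.degree_pos_of_nontrivial i, hdeg i⟩
  have hremainder : z * trace (loopedAdjMatrix G ^ 4 * (G.lapMatrix ℝ + z • 1)⁻¹) ≤
      6 * Fintype.card V :=
    (mul_trace_even_pow_mul_inv_le (isHermitian_loopedAdjMatrix G) hz
      (by simpa using posSemidef_lapMatrix ℝ G) (by decide)).trans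
      (trace_loopedAdjMatrix_pow_four_le hG hdegIcc hV)
  rw [pow_mul_lapResolventTrace hG hz, branchingExcess_eq_zero hdegIcc, add_zero]
  gcongr
  rwa [le_div_iff₀' hz]

theorem le_pow_mul_lapResolventTrace (hG : G.IsTree)
    (hz : ∀ i, 3 ≤ G.degree i → (G.degree i : ℝ) ≤ z) {i : V} (hi : 3 ≤ G.degree i) :
    pathBaseline (Fintype.card V) z + 2 * (z - 1) ≤ (z + 2) ^ 4 * lapResolventTrace G z := by
  have hz0 : 0 < z := lt_of_lt_of_le (mod_cast by omega) (hz i hi)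
  have hexcess := two_mul_sub_one_le_branchingExcess hz hi
  have hremainder := trace_even_pow_mul_nonneg (k := 4) (isHermitian_loopedAdjMatrix G)
    (posDef_lapMatrix_add_smul_one (G := G) hz0).inv.posSemidef (by decide)
  rw [pow_mul_lapResolventTrace hG hz0]
  linarith

end LaplacianResolvent

theorem stmt_8_general {V : Type*} [Fintype V] [DecidableEq V] {T : SimpleGraph V}
    [DecidableRel T.Adj] (hT : T.IsTree) {n : ℕ} (hn : Fintype.card V = n) {z : ℝ}
    (hz0 : 0 < z) (hz : ∀ i, 3 ≤ T.degree i → T.degree i ≤ z ∧ 3 * n ≤ z * (z - 1)) :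
    lapResolventTrace (pathGraph n) z ≤ lapResolventTrace T z := by
  subst hn
  by_cases hdeg : ∀ i, T.degree i ≤ 2
  · obtain ⟨e⟩ := nonempty_pathGraph_iso hT hdeg
    exact (lapResolventTrace_congr e).le
  push Not at hdeg
  obtain ⟨i, hi⟩ := hdeg
  have hcard := (hz i hi).2
  have hV : T.degree i < Fintype.card V := T.degree_lt_card_verts i
  have hpath : (pathGraph (Fintype.card V)).IsTree := by
    rw [← Nat.sub_add_cancel (Nat.one_le_of_lt hV)]
    exact isTree_pathGraph _
  refine le_of_mul_le_mul_left (a := (z + 2) ^ 4) ?_ (by positivity)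
  calc (z + 2) ^ 4 * lapResolventTrace (pathGraph (Fintype.card V)) z
      ≤ pathBaseline (Fintype.card V) z + 6 * Fintype.card V / z := by
        simpa using pow_mul_lapResolventTrace_le hpath degree_pathGraph_le_two
          (by rw [Fintype.card_fin]; omega) hz0
    _ ≤ pathBaseline (Fintype.card V) z + 2 * (z - 1) := by
        gcongr
        rw [div_le_iff₀ hz0]
        linarith
    _ ≤ (z + 2) ^ 4 * lapResolventTrace T z :=
        le_pow_mul_lapResolventTrace hT (fun j hj ↦ (hz j hj).1) hi

theorem stmt_8 (v : ℕ) (hv : 2 ≤ v) (T : SimpleGraph (Fin v)) [DecidableRel T.Adj]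
    (hT : T.IsTree) :
    ∀ y : ℝ, 1 ≤ y →
      Matrix.trace (((SimpleGraph.pathGraph v).lapMatrix ℝ +
        ((v : ℝ) * y) • (1 : Matrix (Fin v) (Fin v) ℝ))⁻¹) ≤
      Matrix.trace ((T.lapMatrix ℝ +
        ((v : ℝ) * y) • (1 : Matrix (Fin v) (Fin v) ℝ))⁻¹) := by
  intro y hy
  exact stmt_8_general hT (Fintype.card_fin v) (by positivity) fun i hi ↦
    branching_bounds_of_card_le hi (Fintype.card_fin v) (le_mul_of_one_le_right v.cast_nonneg hy)
end

section
/- Let v ≥ 3 and let G be a connected simple graph on v vertices with exactly v edges. Then for every real y ≥ 1, trace( (L(C_v) + vy·I)^{−1} ) ≤ trace( (L(G) + vy·I)^{−1} ), where C_v is the cycle graph on v vertices and L(·) denotes the Laplacian matrix (both matrices are positive definite, hence invertible, for y > 0). -/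
/-!
The trace of `(L + c)⁻¹` is the sum of `(λ + c)⁻¹` over the Laplacian eigenvalues `λ`. With
`t = λ - d` and `m = c + d`, bounding `(m + t)⁻¹` by cubic polynomials in `t` reduces both sides to
the moments `tr (L - d)ᵏ`, `k ≤ 3`, which are sums over the degrees up to the closed walks of
length three. The Taylor polynomial bounds `(m + t)⁻¹` below for every graph. For a `d`-regular
triangle-free graph `|t| ≤ d` by Gershgorin, and the Hermite interpolant at `0, 0, d, -d` bounds it
above.

For as many edges as vertices, `d = 2` and the integers `x = deg - 2` have sum zero. If they are
not all zero, their maximum `a` satisfies `1 ≤ a ≤ n - 3`, and `0 ≤ x (x + 1)` gives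
`a (a + 1) ≤ ∑ x²` and `∑ x³ ≤ (a - 1) ∑ x²`, which is enough for the lower bound to exceed the
upper bound for the cycle as soon as `n ≤ c`. If they all vanish, a connected graph is the cycle
itself.
-/

open Finset Matrix Polynomial SimpleGraph

section AdjMatrix

variable {V R : Type*} [Fintype V] [DecidableEq V] (G : SimpleGraph V) [DecidableRel G.Adj]

lemma trace_diagonal_mul_adjMatrix [NonAssocSemiring R] (e : V → R) :
    trace (diagonal e * G.adjMatrix R) = 0 := by
  simp only [trace, diag_apply, diagonal_mul, adjMatrix_apply, G.irrefl, if_false, mul_zero,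
    sum_const_zero]

lemma trace_diagonal_mul_adjMatrix_mul_self [Semiring R] (e : V → R) :
    trace (diagonal e * (G.adjMatrix R * G.adjMatrix R)) = ∑ i, e i * G.degree i := by
  simp only [trace, diag_apply, diagonal_mul, adjMatrix_mul_self_apply_self]

lemma trace_diagonal_sub_adjMatrix [Ring R] (e : V → R) :
    trace (diagonal e - G.adjMatrix R) = ∑ i, e i := by
  rw [trace_sub, trace_adjMatrix, trace_diagonal, sub_zero]

lemma trace_diagonal_sub_adjMatrix_sq [CommRing R] (e : V → R) :
    trace ((diagonal e - G.adjMatrix R) ^ 2) = ∑ i, (e i ^ 2 + G.degree i) := by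
  set A := G.adjMatrix R
  set D := diagonal e
  have hAD : trace (A * D) = 0 := by rw [trace_mul_comm, trace_diagonal_mul_adjMatrix]
  have hAA : trace (A * A) = ∑ i, (G.degree i : R) := by
    simp only [A, trace, diag_apply, adjMatrix_mul_self_apply_self]
  have hDD : trace (D * D) = ∑ i, e i ^ 2 := by
    simp only [D, diagonal_mul_diagonal, trace_diagonal, sq]
  calc trace ((D - A) ^ 2)
      = trace (D * D - D * A - A * D + A * A) := by congr 1; noncomm_ring
    _ = ∑ i, (e i ^ 2 + G.degree i) := by
        rw [trace_add, trace_sub, trace_sub, hDD, trace_diagonal_mul_adjMatrix, hAD, hAA,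
          sub_zero, sub_zero, sum_add_distrib]

lemma trace_diagonal_sub_adjMatrix_pow_three [CommRing R] (e : V → R) :
    trace ((diagonal e - G.adjMatrix R) ^ 3) =
      ∑ i, (e i ^ 3 + 3 * (e i * G.degree i)) - trace (G.adjMatrix R ^ 3) := by
  set A := G.adjMatrix R
  set D := diagonal e
  have hDDA : trace (D * D * A) = 0 := by
    rw [diagonal_mul_diagonal]; exact trace_diagonal_mul_adjMatrix G _
  have hDAA : trace (D * (A * A)) = ∑ i, e i * G.degree i :=
    trace_diagonal_mul_adjMatrix_mul_self G e
  have hDDD : trace (D * D * D) = ∑ i, e i ^ 3 := by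
    simp only [D, diagonal_mul_diagonal, trace_diagonal, pow_three']
  calc trace ((D - A) ^ 3)
      = trace (D * D * D) - trace (D * D * A) - trace (D * A * D) - trace (A * (D * D))
          + trace (D * (A * A)) + trace (A * D * A) + trace (A * A * D) - trace (A ^ 3) := by
        simp only [← trace_add, ← trace_sub]; congr 1; noncomm_ring
    _ = trace (D * D * D) - 3 * trace (D * D * A) + 3 * trace (D * (A * A)) - trace (A ^ 3) := by
        rw [trace_mul_cycle D A D, trace_mul_comm A (D * D), trace_mul_cycle A D A,
          trace_mul_comm (A * A) D]
        ring
    _ = ∑ i, (e i ^ 3 + 3 * (e i * G.degree i)) - trace (A ^ 3) := by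
        rw [hDDD, hDDA, hDAA, sum_add_distrib, mul_sum]; ring

lemma trace_adjMatrix_pow_nonneg [Semiring R] [PartialOrder R] [IsOrderedRing R] (k : ℕ) :
    0 ≤ trace (G.adjMatrix R ^ k) := by
  refine sum_nonneg fun i _ ↦ ?_
  rw [diag_apply, adjMatrix_pow_apply_eq_card_walk]
  exact Nat.cast_nonneg _

variable {G} in
lemma trace_adjMatrix_pow_three_of_cliqueFree [Semiring R] (hG : G.CliqueFree 3) :
    trace (G.adjMatrix R ^ 3) = 0 := by
  refine sum_eq_zero fun i _ ↦ ?_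
  rw [pow_three, diag_apply, adjMatrix_mul_apply]
  refine sum_eq_zero fun j hj ↦ ?_
  rw [adjMatrix_mul_apply]
  refine sum_eq_zero fun k hk ↦ ?_
  rw [mem_neighborFinset] at hj hk
  rw [adjMatrix_apply, if_neg fun hki ↦ hG {i, j, k} (is3Clique_triple_iff.2 ⟨hj, hki.symm, hk⟩)]

end AdjMatrix

section Hermitian

variable {n 𝕜 : Type*} [Fintype n] [DecidableEq n] [RCLike 𝕜] {A : Matrix n n 𝕜}

lemma trace_cfc (hA : A.IsHermitian) (f : ℝ → ℝ) :
    trace (cfc f A) = ∑ i, (f (hA.eigenvalues i) : 𝕜) := by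
  rw [hA.cfc_eq, IsHermitian.cfc, Unitary.conjStarAlgAut_apply, trace_mul_cycle]
  simp only [SetLike.coe_mem, Unitary.star_mul_self_of_mem, one_mul, trace_diagonal,
    Function.comp_apply]

lemma trace_aeval (hA : A.IsHermitian) (p : ℝ[X]) :
    trace (aeval A p) = ∑ i, ((p.eval (hA.eigenvalues i) : ℝ) : 𝕜) := by
  rw [← cfc_polynomial p A hA.isSelfAdjoint, trace_cfc hA]

lemma trace_sub_smul_one_pow (hA : A.IsHermitian) (r : ℝ) (k : ℕ) :
    trace ((A - r • (1 : Matrix n n 𝕜)) ^ k) = ∑ i, (((hA.eigenvalues i - r) ^ k : ℝ) : 𝕜) := by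
  have h := trace_aeval hA ((X - C r) ^ k)
  simpa only [map_pow, map_sub, aeval_X, aeval_C, Algebra.algebraMap_eq_smul_one, eval_pow,
    eval_sub, eval_X, eval_C] using h

lemma trace_inv_add_smul_one (hA : A.IsHermitian) {c : ℝ}
    (hc : ∀ i, hA.eigenvalues i + c ≠ 0) :
    trace ((A + c • (1 : Matrix n n 𝕜))⁻¹) = ∑ i, (((hA.eigenvalues i + c)⁻¹ : ℝ) : 𝕜) := by
  have hcont (f : ℝ → ℝ) : ContinuousOn f (spectrum ℝ A) := A.finite_real_spectrum.continuousOn f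
  have hadd : cfc (fun x ↦ x + c) A = A + c • (1 : Matrix n n 𝕜) := by
    rw [cfc_add_const c _ A (hcont _) hA.isSelfAdjoint, cfc_id' ℝ A hA.isSelfAdjoint,
      Algebra.algebraMap_eq_smul_one]
  have hinv : (A + c • (1 : Matrix n n 𝕜))⁻¹ = cfc (fun x ↦ (x + c)⁻¹) A := by
    refine inv_eq_right_inv ?_
    rw [← hadd, ← cfc_mul _ _ A (hcont _) (hcont _), ← cfc_one ℝ A hA.isSelfAdjoint]
    refine cfc_congr fun x hx ↦ mul_inv_cancel₀ ?_
    obtain ⟨i, rfl⟩ := hA.spectrum_real_eq_range_eigenvalues ▸ hx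
    exact hc i
  rw [hinv, trace_cfc hA]

end Hermitian

lemma cubic_le_inv_add {m t : ℝ} (hm : 0 < m) (ht : 0 < m + t) :
    1 / m - t / m ^ 2 + t ^ 2 / m ^ 3 - t ^ 3 / m ^ 4 ≤ (m + t)⁻¹ := by
  have h : (m + t)⁻¹ - (1 / m - t / m ^ 2 + t ^ 2 / m ^ 3 - t ^ 3 / m ^ 4) =
      t ^ 4 / (m ^ 4 * (m + t)) := by field
  rw [← sub_nonneg, h]
  positivity

lemma inv_add_le_cubic {d m t : ℝ} (hd : 0 ≤ d) (hm : d < m) (ht : |t| ≤ d) :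
    (m + t)⁻¹ ≤
      1 / m - t / m ^ 2 + t ^ 2 / (m * (m ^ 2 - d ^ 2)) - t ^ 3 / (m ^ 2 * (m ^ 2 - d ^ 2)) := by
  have hmt : 0 < m + t := by linarith [neg_le_of_abs_le ht]
  have hmd : 0 < m ^ 2 - d ^ 2 := by nlinarith
  have hdt : 0 ≤ d ^ 2 - t ^ 2 := sub_nonneg.2 (sq_le_sq' (neg_le_of_abs_le ht) (le_of_abs_le ht))
  have hm0 : 0 < m := by linarith
  have h : 1 / m - t / m ^ 2 + t ^ 2 / (m * (m ^ 2 - d ^ 2)) - t ^ 3 / (m ^ 2 * (m ^ 2 - d ^ 2))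
      - (m + t)⁻¹ = t ^ 2 * (d ^ 2 - t ^ 2) / (m ^ 2 * (m ^ 2 - d ^ 2) * (m + t)) := by
    field
  rw [← sub_nonneg, h]
  positivity

section PowerSums

variable {ι : Type*} {s : Finset ι} {m : ℝ} {t : ι → ℝ}

lemma power_sums_le_sum_inv_add (hm : 0 < m) (ht : ∀ i ∈ s, 0 < m + t i) :
    #s / m - (∑ i ∈ s, t i) / m ^ 2 + (∑ i ∈ s, t i ^ 2) / m ^ 3 - (∑ i ∈ s, t i ^ 3) / m ^ 4 ≤
      ∑ i ∈ s, (m + t i)⁻¹ := by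
  have h := sum_le_sum fun i hi ↦ cubic_le_inv_add hm (ht i hi)
  simpa only [sum_sub_distrib, sum_add_distrib, ← sum_div, sum_const, nsmul_eq_mul, mul_one]
    using h

lemma sum_inv_add_le_power_sums {d : ℝ} (hd : 0 ≤ d) (hm : d < m) (ht : ∀ i ∈ s, |t i| ≤ d) :
    ∑ i ∈ s, (m + t i)⁻¹ ≤ #s / m - (∑ i ∈ s, t i) / m ^ 2
      + (∑ i ∈ s, t i ^ 2) / (m * (m ^ 2 - d ^ 2))
      - (∑ i ∈ s, t i ^ 3) / (m ^ 2 * (m ^ 2 - d ^ 2)) := by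
  have h := sum_le_sum fun i hi ↦ inv_add_le_cubic hd hm (ht i hi)
  simpa only [sum_sub_distrib, sum_add_distrib, ← sum_div, sum_const, nsmul_eq_mul, mul_one]
    using h

end PowerSums

section IntSums

variable {ι : Type*} {s : Finset ι} {x : ι → ℤ}

lemma int_mul_add_one_nonneg (x : ℤ) : 0 ≤ x * (x + 1) := by
  rcases lt_or_ge x 0 with hx | hx <;> nlinarith

lemma mul_add_one_le_sum_sq_of_sum_eq_zero (hx : ∑ i ∈ s, x i = 0) {j : ι} (hj : j ∈ s) :
    x j * (x j + 1) ≤ ∑ i ∈ s, x i ^ 2 := by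
  calc x j * (x j + 1) ≤ ∑ i ∈ s, x i * (x i + 1) :=
        single_le_sum (f := fun i ↦ x i * (x i + 1)) (fun i _ ↦ int_mul_add_one_nonneg (x i)) hj
    _ = ∑ i ∈ s, x i ^ 2 + ∑ i ∈ s, x i := by
        rw [← sum_add_distrib]; exact sum_congr rfl fun i _ ↦ by ring
    _ = ∑ i ∈ s, x i ^ 2 := by rw [hx, add_zero]

lemma sum_pow_three_le_of_sum_eq_zero (hx : ∑ i ∈ s, x i = 0) {a : ℤ} (ha : ∀ i ∈ s, x i ≤ a) :
    ∑ i ∈ s, x i ^ 3 ≤ (a - 1) * ∑ i ∈ s, x i ^ 2 := by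
  calc ∑ i ∈ s, x i ^ 3 ≤ ∑ i ∈ s, ((a - 1) * x i ^ 2 + a * x i) := by
        refine sum_le_sum fun i hi ↦ ?_
        nlinarith [mul_nonneg (int_mul_add_one_nonneg (x i)) (sub_nonneg.2 (ha i hi))]
    _ = (a - 1) * ∑ i ∈ s, x i ^ 2 + a * ∑ i ∈ s, x i := by
        rw [sum_add_distrib, ← mul_sum, ← mul_sum]
    _ = (a - 1) * ∑ i ∈ s, x i ^ 2 := by rw [hx, mul_zero, add_zero]

lemma exists_mul_add_one_le_sum_sq_and_sum_pow_three_le (hx : ∑ i ∈ s, x i = 0)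
    (hne : ∃ i ∈ s, x i ≠ 0) :
    ∃ j ∈ s, 1 ≤ x j ∧ x j * (x j + 1) ≤ ∑ i ∈ s, x i ^ 2 ∧
      ∑ i ∈ s, x i ^ 3 ≤ (x j - 1) * ∑ i ∈ s, x i ^ 2 := by
  obtain ⟨k, hk, hkpos⟩ := exists_pos_of_sum_zero_of_exists_nonzero x hx hne
  obtain ⟨j, hj, hmax⟩ := exists_max_image s x ⟨k, hk⟩
  exact ⟨j, hj, hkpos.trans_le (hmax k hk), mul_add_one_le_sum_sq_of_sum_eq_zero hx hj,
    sum_pow_three_le_of_sum_eq_zero hx hmax⟩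

end IntSums

lemma eight_mul_mul_add_two_le {a n c S T : ℝ} (ha : 1 ≤ a) (han : a + 3 ≤ n) (hnc : n ≤ c)
    (hS : a * (a + 1) ≤ S) (hT : T ≤ (a - 1) * S) :
    8 * n * (c + 2) ≤ c * (c + 4) * ((c - 1) * S - T) := by
  have hprod : c - 1 ≤ (c - a) * a := by nlinarith
  have hexcess : 2 * (c - 1) ≤ (c - 1) * S - T :=
    calc 2 * (c - 1) ≤ (a + 1) * ((c - a) * a) := by gcongr <;> linarith
      _ = (c - a) * (a * (a + 1)) := by ring
      _ ≤ (c - a) * S := by gcongr; linarith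
      _ ≤ (c - 1) * S - T := by linarith
  calc 8 * n * (c + 2) ≤ c * (8 * (c + 2)) := by nlinarith
    _ ≤ c * ((c + 4) * (2 * (c - 1))) := by gcongr ?_ * ?_ <;> nlinarith
    _ = c * (c + 4) * (2 * (c - 1)) := by ring
    _ ≤ c * (c + 4) * ((c - 1) * S - T) := by gcongr; nlinarith

section Laplacian

variable {V : Type*} [Fintype V] [DecidableEq V] (G : SimpleGraph V) [DecidableRel G.Adj]

lemma lapMatrix_sub_smul_one {R : Type*} [Ring R] (r : R) :
    G.lapMatrix R - r • (1 : Matrix V V R) =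
      diagonal (fun v ↦ (G.degree v : R) - r) - G.adjMatrix R := by
  rw [lapMatrix, degMatrix, smul_one_eq_diagonal, sub_right_comm, diagonal_sub]

lemma sum_eigenvalues_lapMatrix_sub_pow (r : ℝ) (k : ℕ) :
    ∑ i, ((G.isHermitian_lapMatrix ℝ).eigenvalues i - r) ^ k =
      trace ((diagonal (fun v ↦ (G.degree v : ℝ) - r) - G.adjMatrix ℝ) ^ k) := by
  rw [← lapMatrix_sub_smul_one, trace_sub_smul_one_pow (G.isHermitian_lapMatrix ℝ)]
  rfl

lemma trace_inv_lapMatrix_add_smul_one {c : ℝ} (hc : 0 < c) :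
    trace ((G.lapMatrix ℝ + c • (1 : Matrix V V ℝ))⁻¹) =
      ∑ i, ((G.isHermitian_lapMatrix ℝ).eigenvalues i + c)⁻¹ :=
  trace_inv_add_smul_one (G.isHermitian_lapMatrix ℝ) fun i ↦
    (add_pos_of_nonneg_of_pos ((G.posSemidef_lapMatrix ℝ).eigenvalues_nonneg i) hc).ne'

lemma exists_abs_eigenvalues_lapMatrix_sub_degree_le (i : V) :
    ∃ v, |(G.isHermitian_lapMatrix ℝ).eigenvalues i - G.degree v| ≤ G.degree v := by
  have heigen : Module.End.HasEigenvalue (toLin' (G.lapMatrix ℝ))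
      ((G.isHermitian_lapMatrix ℝ).eigenvalues i) := by
    rw [Module.End.hasEigenvalue_iff_mem_spectrum, spectrum_toLin']
    exact (G.isHermitian_lapMatrix ℝ).eigenvalues_mem_spectrum_real i
  obtain ⟨v, hv⟩ := eigenvalue_mem_ball heigen
  have hdiag : G.lapMatrix ℝ v v = G.degree v := by
    simp [lapMatrix, degMatrix]
  have hrow : ∑ w ∈ univ.erase v, ‖G.lapMatrix ℝ v w‖ = G.degree v := by
    rw [degree_eq_sum_if_adj, ← add_sum_erase _ _ (mem_univ v), if_neg G.irrefl, zero_add]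
    refine sum_congr rfl fun w hw ↦ ?_
    rw [lapMatrix, degMatrix, Matrix.sub_apply, diagonal_apply_ne' _ (ne_of_mem_erase hw), zero_sub,
      norm_neg, adjMatrix_apply, apply_ite norm, norm_one, norm_zero]
  exact ⟨v, by rwa [Metric.mem_closedBall, Real.dist_eq, hdiag, hrow] at hv⟩

lemma degree_sums_le_trace_inv_lapMatrix {c r : ℝ} (hc : 0 < c) (hcr : 0 < c + r) :
    Fintype.card V / (c + r) - (∑ v, ((G.degree v : ℝ) - r)) / (c + r) ^ 2
        + (∑ v, (((G.degree v : ℝ) - r) ^ 2 + G.degree v)) / (c + r) ^ 3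
        - (∑ v, (((G.degree v : ℝ) - r) ^ 3 + 3 * ((G.degree v - r) * G.degree v))) / (c + r) ^ 4 ≤
      trace ((G.lapMatrix ℝ + c • (1 : Matrix V V ℝ))⁻¹) := by
  set eig := (G.isHermitian_lapMatrix ℝ).eigenvalues
  have heig (i : V) : c + r + (eig i - r) = eig i + c := by ring
  have hpow := sum_eigenvalues_lapMatrix_sub_pow G r
  have hone : ∑ i, (eig i - r) = ∑ v, ((G.degree v : ℝ) - r) := by
    simpa only [pow_one, trace_diagonal_sub_adjMatrix] using hpow 1
  have htwo : ∑ i, (eig i - r) ^ 2 = ∑ v, (((G.degree v : ℝ) - r) ^ 2 + G.degree v) :=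
    (hpow 2).trans (trace_diagonal_sub_adjMatrix_sq G _)
  have hthree : ∑ i, (eig i - r) ^ 3 ≤
      ∑ v, (((G.degree v : ℝ) - r) ^ 3 + 3 * ((G.degree v - r) * G.degree v)) := by
    rw [hpow 3, trace_diagonal_sub_adjMatrix_pow_three]
    exact sub_le_self _ (trace_adjMatrix_pow_nonneg G 3)
  have hpos (i : V) : 0 < c + r + (eig i - r) := by
    rw [heig]
    exact add_pos_of_nonneg_of_pos ((G.posSemidef_lapMatrix ℝ).eigenvalues_nonneg i) hc
  have hle := power_sums_le_sum_inv_add hcr fun i (_ : i ∈ univ) ↦ hpos i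
  simp only [heig, hone, htwo, card_univ] at hle
  rw [trace_inv_lapMatrix_add_smul_one G hc]
  refine le_trans ?_ hle
  gcongr

lemma degree_sums_le_trace_inv_lapMatrix_of_sum_eq_zero {c d : ℝ}
    (hd : ∑ v, ((G.degree v : ℝ) - d) = 0) (hc : 0 < c) (hcd : 0 < c + d) :
    Fintype.card V / (c + d) + d * Fintype.card V / (c + d) ^ 3
        + ((c + d - 3) * ∑ v, ((G.degree v : ℝ) - d) ^ 2 - ∑ v, ((G.degree v : ℝ) - d) ^ 3)
          / (c + d) ^ 4 ≤
      trace ((G.lapMatrix ℝ + c • (1 : Matrix V V ℝ))⁻¹) := by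
  have hdeg : ∑ v, (G.degree v : ℝ) = d * Fintype.card V := by
    simpa [sub_eq_zero, mul_comm] using hd
  have hmul : ∑ v, ((G.degree v : ℝ) - d) * G.degree v = ∑ v, ((G.degree v : ℝ) - d) ^ 2 := by
    calc ∑ v, ((G.degree v : ℝ) - d) * G.degree v
        = ∑ v, (((G.degree v : ℝ) - d) ^ 2 + d * (G.degree v - d)) :=
          sum_congr rfl fun v _ ↦ by ring
      _ = ∑ v, ((G.degree v : ℝ) - d) ^ 2 := by
          rw [sum_add_distrib, ← mul_sum, hd, mul_zero, add_zero]
  have hle := degree_sums_le_trace_inv_lapMatrix G hc hcd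
  rw [hd, sum_add_distrib, sum_add_distrib, ← mul_sum, hmul, hdeg] at hle
  refine le_of_eq_of_le ?_ hle
  field

variable {G} in
lemma trace_inv_lapMatrix_le_of_cliqueFree {c : ℝ} {d : ℕ} (hreg : G.IsRegularOfDegree d)
    (hfree : G.CliqueFree 3) (hc : 0 < c) :
    trace ((G.lapMatrix ℝ + c • (1 : Matrix V V ℝ))⁻¹) ≤
      Fintype.card V / (c + d) + Fintype.card V * d / ((c + d) * ((c + d) ^ 2 - d ^ 2)) := by
  set eig := (G.isHermitian_lapMatrix ℝ).eigenvalues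
  have hpow := sum_eigenvalues_lapMatrix_sub_pow G d
  simp only [hreg.degree_eq, sub_self] at hpow
  have hone : ∑ i, (eig i - d) = 0 := by
    simpa only [pow_one, trace_diagonal_sub_adjMatrix, sum_const_zero] using hpow 1
  have htwo : ∑ i, (eig i - d) ^ 2 = Fintype.card V * d := by
    rw [hpow 2, trace_diagonal_sub_adjMatrix_sq]
    simp [hreg.degree_eq]
  have hthree : ∑ i, (eig i - d) ^ 3 = 0 := by
    rw [hpow 3, trace_diagonal_sub_adjMatrix_pow_three,
      trace_adjMatrix_pow_three_of_cliqueFree hfree]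
    simp
  have habs (i : V) : |eig i - d| ≤ d := by
    obtain ⟨v, hv⟩ := exists_abs_eigenvalues_lapMatrix_sub_degree_le G i
    rwa [hreg.degree_eq] at hv
  have hle := sum_inv_add_le_power_sums d.cast_nonneg (lt_add_of_pos_left (d : ℝ) hc)
    fun i (_ : i ∈ univ) ↦ habs i
  rw [hone, htwo, hthree, zero_div, zero_div, sub_zero, sub_zero, card_univ] at hle
  rw [trace_inv_lapMatrix_add_smul_one G hc]
  convert hle using 3
  ring

variable {G} in
lemma trace_inv_lapMatrix_add_smul_one_congr {W R : Type*} [Fintype W] [DecidableEq W] [CommRing R]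
    {H : SimpleGraph W} [DecidableRel H.Adj] (e : H ≃g G) (c : R) :
    trace ((H.lapMatrix R + c • (1 : Matrix W W R))⁻¹) =
      trace ((G.lapMatrix R + c • (1 : Matrix V V R))⁻¹) := by
  have hsub : H.lapMatrix R + c • (1 : Matrix W W R) =
      (G.lapMatrix R + c • (1 : Matrix V V R)).submatrix e.toEquiv e.toEquiv := by
    ext i j
    simp [lapMatrix, degMatrix, diagonal_apply, one_apply, e.degree_eq, e.map_adj_iff,
      adjMatrix_apply]
  rw [hsub, inv_submatrix_equiv]
  exact e.toEquiv.sum_comp fun i ↦ (G.lapMatrix R + c • (1 : Matrix V V R))⁻¹ i i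

end Laplacian

open scoped Fin.CommRing in
lemma cliqueFree_three_cycleGraph {n : ℕ} (hn : 4 ≤ n) : (cycleGraph n).CliqueFree 3 := by
  obtain ⟨k, rfl⟩ := Nat.exists_eq_add_of_le' hn
  intro s hs
  obtain ⟨a, b, c, hab, hac, hbc, -⟩ := is3Clique_iff.1 hs
  rw [cycleGraph_adj] at hab hac hbc
  have h1 : (1 : Fin (k + 4)) ≠ 0 := one_ne_zero
  have h3 : (3 : Fin (k + 4)) ≠ 0 := by
    simp [Fin.ext_iff, Nat.mod_eq_of_lt (show 3 < k + 4 by lia)]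
  grind

section Copy

variable {V W : Type*} {G : SimpleGraph V} {H : SimpleGraph W} [G.LocallyFinite] [H.LocallyFinite]
  (f : Copy H G)

lemma exists_adj_of_degree_le {i : W} (hdeg : G.degree (f i) ≤ H.degree i) {x : V}
    (hx : G.Adj (f i) x) : ∃ j, H.Adj i j ∧ f j = x := by
  classical
  have himage : (H.neighborFinset i).image f = G.neighborFinset (f i) := by
    refine eq_of_subset_of_card_le ?_ ?_
    · simp only [image_subset_iff, mem_neighborFinset]
      exact fun j hj ↦ f.toHom.map_adj hj
    · rwa [card_image_of_injective (f := f) _ f.injective]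
  simpa only [← himage, mem_image, mem_neighborFinset] using (G.mem_neighborFinset (f i) x).2 hx

lemma surjective_of_degree_le [Nonempty W] (hG : G.Preconnected)
    (hdeg : ∀ i, G.degree (f i) ≤ H.degree i) : Function.Surjective f := by
  have hwalk {a b : V} (p : G.Walk a b) (ha : a ∈ Set.range f) : b ∈ Set.range f := by
    induction p with
    | nil => exact ha
    | cons hadj _ ih =>
      obtain ⟨i, rfl⟩ := ha
      obtain ⟨j, -, rfl⟩ := exists_adj_of_degree_le f (hdeg i) hadj
      exact ih ⟨j, rfl⟩
  intro x
  obtain ⟨i⟩ := ‹Nonempty W›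
  exact hwalk (hG (f i) x).some ⟨i, rfl⟩

lemma nonempty_iso_of_degree_le [Nonempty W] (hG : G.Preconnected)
    (hdeg : ∀ i, G.degree (f i) ≤ H.degree i) : Nonempty (H ≃g G) := by
  let e := Equiv.ofBijective f ⟨f.injective, surjective_of_degree_le f hG hdeg⟩
  refine ⟨⟨e, fun {i j} ↦ ⟨fun hij ↦ ?_, f.toHom.map_adj⟩⟩⟩
  obtain ⟨k, hk, hkj⟩ := exists_adj_of_degree_le f (hdeg i) hij
  rwa [← f.injective hkj]

end Copy

lemma nonempty_iso_cycleGraph_of_isRegularOfDegree_two {V : Type*} [Fintype V] {G : SimpleGraph V}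
    [DecidableRel G.Adj] (hG : G.Connected) (hreg : G.IsRegularOfDegree 2) :
    Nonempty (cycleGraph (Fintype.card V) ≃g G) := by
  classical
  have hedges : #G.edgeFinset = Fintype.card V := by
    have h := G.sum_degrees_eq_twice_card_edges
    simp only [hreg.degree_eq, sum_const, card_univ, smul_eq_mul] at h
    lia
  have hcycle : ¬ G.IsAcyclic := fun hacyc ↦ by
    have h := IsTree.card_edgeFinset (G := G) ⟨hG, hacyc⟩
    lia
  simp only [isAcyclic_iff_free_cycleGraph, Free, not_forall, not_not] at hcycle
  obtain ⟨k, hk, ⟨f⟩⟩ := hcycle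
  obtain ⟨l, rfl⟩ := Nat.exists_eq_add_of_le' hk
  obtain ⟨e⟩ := nonempty_iso_of_degree_le f hG.preconnected fun i ↦ by
    rw [hreg.degree_eq, cycleGraph_degree_three_le]
  rw [← e.card_eq, Fintype.card_fin]
  exact ⟨e⟩

lemma trace_inv_lapMatrix_cycleGraph_le {n : ℕ} (hn : 4 ≤ n) {c : ℝ} (hc : 0 < c) :
    trace (((cycleGraph n).lapMatrix ℝ + c • (1 : Matrix (Fin n) (Fin n) ℝ))⁻¹) ≤
      n / (c + 2) + 2 * n / (c * (c + 2) * (c + 4)) := by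
  have hreg : (cycleGraph n).IsRegularOfDegree 2 := by
    obtain ⟨k, rfl⟩ := Nat.exists_eq_add_of_le' hn
    exact fun _ ↦ cycleGraph_degree_three_le
  convert trace_inv_lapMatrix_le_of_cliqueFree hreg (cliqueFree_three_cycleGraph hn) hc using 2
  · simp
  · rw [Fintype.card_fin, Nat.cast_ofNat]
    congr 1 <;> ring

section Comparison

variable {V : Type*} [Fintype V] {G : SimpleGraph V} [DecidableRel G.Adj]

lemma sum_degree_sub_two_eq_zero (hedges : #G.edgeFinset = Fintype.card V) :
    ∑ v, ((G.degree v : ℤ) - 2) = 0 := by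
  rw [sum_sub_distrib, ← Nat.cast_sum, sum_degrees_eq_twice_card_edges, hedges]
  simp [mul_comm]

lemma exists_three_le_degree_and_sum_bounds (hedges : #G.edgeFinset = Fintype.card V)
    (hreg : ¬ G.IsRegularOfDegree 2) :
    ∃ v, 3 ≤ G.degree v ∧
      ((G.degree v : ℝ) - 2) * (G.degree v - 2 + 1) ≤ ∑ w, ((G.degree w : ℝ) - 2) ^ 2 ∧
      ∑ w, ((G.degree w : ℝ) - 2) ^ 3 ≤
        ((G.degree v : ℝ) - 2 - 1) * ∑ w, ((G.degree w : ℝ) - 2) ^ 2 := by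
  obtain ⟨w, hw⟩ := not_forall.1 hreg
  obtain ⟨v, -, hv, hsq, hcube⟩ := exists_mul_add_one_le_sum_sq_and_sum_pow_three_le
    (sum_degree_sub_two_eq_zero hedges) ⟨w, mem_univ w, by lia⟩
  exact ⟨v, by lia, by exact_mod_cast hsq, by exact_mod_cast hcube⟩

variable [DecidableEq V]

lemma trace_inv_cycleGraph_le_of_not_isRegularOfDegree_two
    (hedges : #G.edgeFinset = Fintype.card V) (hreg : ¬ G.IsRegularOfDegree 2) {c : ℝ}
    (hc : Fintype.card V ≤ c) :
    trace (((cycleGraph (Fintype.card V)).lapMatrix ℝ + c • (1 : Matrix (Fin _) (Fin _) ℝ))⁻¹) ≤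
      trace ((G.lapMatrix ℝ + c • (1 : Matrix V V ℝ))⁻¹) := by
  obtain ⟨v, hv, hsq, hcube⟩ := exists_three_le_degree_and_sum_bounds hedges hreg
  have hlt := G.degree_lt_card_verts v
  have hlt' : (G.degree v : ℝ) + 1 ≤ Fintype.card V := by exact_mod_cast hlt
  have hv' : (3 : ℝ) ≤ G.degree v := by exact_mod_cast hv
  have hcpos : 0 < c := by linarith
  have hzero : ∑ w, ((G.degree w : ℝ) - 2) = 0 := by
    exact_mod_cast sum_degree_sub_two_eq_zero hedges
  have hgap := eight_mul_mul_add_two_le (a := G.degree v - 2) (by linarith) (by linarith) hc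
    hsq hcube
  have hcycle := trace_inv_lapMatrix_cycleGraph_le (n := Fintype.card V) (by lia) hcpos
  have hlower := degree_sums_le_trace_inv_lapMatrix_of_sum_eq_zero G hzero hcpos (by positivity)
  refine hcycle.trans (le_trans ?_ hlower)
  set N : ℝ := (Fintype.card V : ℝ)
  set S := ∑ w, ((G.degree w : ℝ) - 2) ^ 2
  set T := ∑ w, ((G.degree w : ℝ) - 2) ^ 3
  have hdiff : N / (c + 2) + 2 * N / (c + 2) ^ 3 + ((c + 2 - 3) * S - T) / (c + 2) ^ 4
      - (N / (c + 2) + 2 * N / (c * (c + 2) * (c + 4))) =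
      (c * (c + 4) * ((c - 1) * S - T) - 8 * N * (c + 2)) / (c * (c + 4) * (c + 2) ^ 4) := by
    field
  rw [← sub_nonneg, hdiff]
  exact div_nonneg (sub_nonneg.2 hgap) (by positivity)

theorem stmt_10_general (hG : G.IsRegularOfDegree 2 → G.Connected)
    (hedges : #G.edgeFinset = Fintype.card V) {c : ℝ} (hc : Fintype.card V ≤ c) :
    trace (((cycleGraph (Fintype.card V)).lapMatrix ℝ + c • (1 : Matrix (Fin _) (Fin _) ℝ))⁻¹) ≤
      trace ((G.lapMatrix ℝ + c • (1 : Matrix V V ℝ))⁻¹) := by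
  by_cases hreg : G.IsRegularOfDegree 2
  · obtain ⟨e⟩ := nonempty_iso_cycleGraph_of_isRegularOfDegree_two (hG hreg) hreg
    exact (trace_inv_lapMatrix_add_smul_one_congr e c).le
  · exact trace_inv_cycleGraph_le_of_not_isRegularOfDegree_two hedges hreg hc

end Comparison

theorem stmt_10 (v : ℕ) (hv : 3 ≤ v) (G : SimpleGraph (Fin v)) [DecidableRel G.Adj]
    (hconn : G.Connected) (hedges : G.edgeFinset.card = v) :
    ∀ y : ℝ, 1 ≤ y →
      Matrix.trace (((SimpleGraph.cycleGraph v).lapMatrix ℝ +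
        ((v : ℝ) * y) • (1 : Matrix (Fin v) (Fin v) ℝ))⁻¹) ≤
      Matrix.trace ((G.lapMatrix ℝ +
        ((v : ℝ) * y) • (1 : Matrix (Fin v) (Fin v) ℝ))⁻¹) := by
  intro y hy
  have h := stmt_10_general (fun _ ↦ hconn) (by rwa [Fintype.card_fin])
    (c := v * y) (by rw [Fintype.card_fin]; exact le_mul_of_one_le_right v.cast_nonneg hy)
  rwa [Fintype.card_fin] at h
end

section
/- Let v ≥ 2 and δ ≥ 1 be integers. There exists x₀ > 0 such that for every real x ≥ x₀ and for all δ-regular simple graphs G and G′ on v vertices with η(Gᶜ) < η(G′ᶜ) (where Gᶜ denotes the complement graph), one has det( L(G) + vx·I ) > det( L(G′) + vx·I ) and trace( (L(G) + vx·I)^{−1} ) < trace( (L(G′) + vx·I)^{−1} ). -/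
/-- The number of V-subgraphs of `G`: 3-element vertex subsets carrying exactly two
edges of `G` (counted here as ordered pairs, hence the value `4`). -/
def numVSubgraphs {V : Type*} [Fintype V] [DecidableEq V] (G : SimpleGraph V)
    [DecidableRel G.Adj] : ℕ :=
  ((Finset.univ.powersetCard 3).filter
    (fun s => ((s ×ˢ s).filter fun p => G.Adj p.1 p.2).card = 4)).card

/-!
The power sums of orders `0`, `1`, `2` of the Laplacian eigenvalues of a graph depend only on its
degrees, and so does the third one up to the summand `-2 η(Gᶜ)`: with `A` the adjacency matrix and
`J` the all-ones matrix, the trace of `A³` counts triangles, and expanding `(J - 1 - A)² A`, whose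
trace counts V-subgraphs of the complement, trades them for `η(Gᶜ)`. The logarithm of
`det (L + y)` is `∑ log (1 + λ / y)` up to a term depending only on `y`, and `-y` times the trace
of `(L + y)⁻¹` is `-∑ (1 + λ / y)⁻¹`. In both Taylor expansions at `y = ∞` the third power sum is
the first one to distinguish the two graphs, and its coefficient is positive.
-/

open Finset Matrix Filter Topology Asymptotics

section VSubgraphs

variable {V : Type*} [DecidableEq V] (H : SimpleGraph V) [DecidableRel H.Adj]

lemma card_filter_adj_triple {a b c : V} (hab : a ≠ b) (hac : a ≠ c) (hbc : b ≠ c) :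
    #{p ∈ ({a, b, c} : Finset V) ×ˢ {a, b, c} | H.Adj p.1 p.2} =
      2 * ((if H.Adj a b then 1 else 0) + (if H.Adj b c then 1 else 0)
        + (if H.Adj a c then 1 else 0)) := by
  rw [card_filter, sum_product]
  simp only [sum_insert (show a ∉ ({b, c} : Finset V) by simp [hab, hac]),
    sum_insert (show b ∉ ({c} : Finset V) by simp [hbc]), sum_singleton,
    SimpleGraph.irrefl, H.adj_comm b a, H.adj_comm c a, H.adj_comm c b, if_false]
  ring

lemma card_eq_three_and_card_filter_adj_eq_four_iff {s : Finset V} :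
    #s = 3 ∧ #{p ∈ s ×ˢ s | H.Adj p.1 p.2} = 4 ↔
      ∃ a b c, H.Adj a b ∧ H.Adj b c ∧ Hᶜ.Adj a c ∧ s = {a, b, c} := by
  constructor
  · rintro ⟨hs, hcard⟩
    obtain ⟨a, b, c, hab, hac, hbc, rfl⟩ := card_eq_three.1 hs
    rw [card_filter_adj_triple H hab hac hbc] at hcard
    by_cases Hab : H.Adj a b <;> by_cases Hbc : H.Adj b c <;> by_cases Hac : H.Adj a c <;>
      simp only [Hab, Hbc, Hac, if_true, if_false] at hcard <;> try omega
    · exact ⟨a, b, c, Hab, Hbc, ⟨hac, Hac⟩, rfl⟩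
    · exact ⟨b, a, c, Hab.symm, Hac, ⟨hbc, Hbc⟩, insert_comm a b {c}⟩
    · exact ⟨a, c, b, Hac, Hbc.symm, ⟨hab, Hab⟩, by rw [pair_comm b c]⟩
  · rintro ⟨a, b, c, hab, hbc, ⟨hac, hnac⟩, rfl⟩
    refine ⟨card_eq_three.2 ⟨a, b, c, hab.ne, hac, hbc.ne, rfl⟩, ?_⟩
    simp [card_filter_adj_triple H hab.ne hac hbc.ne, hab, hbc, hnac]

variable [Fintype V]

/-- The ordered induced paths `a – b – c` on three vertices of `H`, as triples `(a, b, c)`. Each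
V-subgraph of `H` gives rise to two of them. -/
def inducedPaths : Finset (V × V × V) :=
  {p | H.Adj p.1 p.2.1 ∧ H.Adj p.2.1 p.2.2 ∧ Hᶜ.Adj p.1 p.2.2}

lemma filter_inducedPaths_eq_pair {a b c : V} (hab : H.Adj a b) (hbc : H.Adj b c)
    (hac : Hᶜ.Adj a c) :
    {p ∈ inducedPaths H | {p.1, p.2.1, p.2.2} = ({a, b, c} : Finset V)} =
      {(a, b, c), (c, b, a)} := by
  ext ⟨x, y, z⟩
  simp only [inducedPaths, mem_filter, mem_univ, true_and, mem_insert, mem_singleton, Prod.mk.injEq]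
  constructor
  · rintro ⟨⟨hxy, hyz, hxz⟩, heq⟩
    have hx : x ∈ ({a, b, c} : Finset V) := by simp [← heq]
    have hy : y ∈ ({a, b, c} : Finset V) := by simp [← heq]
    have hz : z ∈ ({a, b, c} : Finset V) := by simp [← heq]
    simp only [mem_insert, mem_singleton] at hx hy hz
    grind [SimpleGraph.compl_adj, SimpleGraph.adj_comm, SimpleGraph.irrefl]
  · rintro (⟨rfl, rfl, rfl⟩ | ⟨rfl, rfl, rfl⟩)
    · exact ⟨⟨hab, hbc, hac⟩, rfl⟩
    · exact ⟨⟨hbc.symm, hab.symm, hac.symm⟩, by grind⟩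

lemma card_inducedPaths : #(inducedPaths H) = 2 * numVSubgraphs H := by
  have mapsTo : ∀ p ∈ inducedPaths H, ({p.1, p.2.1, p.2.2} : Finset V) ∈
      {s ∈ (univ : Finset V).powersetCard 3 | #{p ∈ s ×ˢ s | H.Adj p.1 p.2} = 4} := by
    rintro ⟨a, b, c⟩ hp
    simp only [inducedPaths, mem_filter, mem_univ, true_and] at hp
    simp only [mem_filter, mem_powersetCard_univ, card_eq_three_and_card_filter_adj_eq_four_iff]
    exact ⟨a, b, c, hp.1, hp.2.1, hp.2.2, rfl⟩
  rw [card_eq_sum_card_fiberwise mapsTo, numVSubgraphs, sum_const_nat, mul_comm]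
  intro s hs
  rw [mem_filter, mem_powersetCard_univ, card_eq_three_and_card_filter_adj_eq_four_iff] at hs
  obtain ⟨a, b, c, hab, hbc, hac, rfl⟩ := hs
  rw [filter_inducedPaths_eq_pair H hab hbc hac, card_pair (by simp [hac.ne])]

lemma trace_adjMatrix_mul_self_mul_compl (R : Type*) [Semiring R] :
    (H.adjMatrix R * H.adjMatrix R * Hᶜ.adjMatrix R).trace = 2 * numVSubgraphs H := by
  have count : (#(inducedPaths H) : R) =
      ∑ a, ∑ b, ∑ c, H.adjMatrix R a b * (H.adjMatrix R b c * Hᶜ.adjMatrix R c a) := by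
    simp only [inducedPaths, natCast_card_filter, Fintype.sum_prod_type,
      SimpleGraph.adjMatrix_apply, ite_zero_mul_ite_zero, mul_one, Hᶜ.adj_comm]
  rw [mul_assoc, ← Nat.cast_ofNat, ← Nat.cast_mul, ← card_inducedPaths, count]
  simp only [trace, diag_apply, mul_apply, mul_sum]

end VSubgraphs

section TraceSub

variable {ι R : Type*} [Fintype ι] [DecidableEq ι] [CommRing R] (M N : Matrix ι ι R)

lemma trace_sub_sq :
    ((M - N) ^ 2).trace = (M ^ 2).trace - 2 * (M * N).trace + (N ^ 2).trace := by
  have expand : (M - N) ^ 2 = M ^ 2 - M * N - N * M + N ^ 2 := by noncomm_ring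
  rw [expand, trace_add, trace_sub, trace_sub, trace_mul_comm N M]
  ring

lemma trace_sub_cube :
    ((M - N) ^ 3).trace =
      (M ^ 3).trace - 3 * (M ^ 2 * N).trace + 3 * (M * N ^ 2).trace - (N ^ 3).trace := by
  have expand : (M - N) ^ 3 =
      M ^ 3 - M ^ 2 * N - M * N * M - N * M ^ 2 + M * N ^ 2 + N * M * N + N ^ 2 * M - N ^ 3 := by
    noncomm_ring
  have trace_mul_mul_self (A B : Matrix ι ι R) : (A * B * A).trace = (A ^ 2 * B).trace := by
    rw [trace_mul_cycle, pow_two]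
  rw [expand]
  simp only [trace_add, trace_sub, trace_mul_mul_self, trace_mul_comm N (M ^ 2),
    trace_mul_comm (N ^ 2) M]
  ring

lemma trace_diagonal_mul (d : ι → R) : (diagonal d * M).trace = ∑ i, d i * M i i := by
  simp only [trace, diag_apply, diagonal_mul]

end TraceSub

section AdjacencyTraces

variable {V R : Type*} (G : SimpleGraph V) [DecidableRel G.Adj]

lemma adjMatrix_compl_eq_of_one_sub_one_sub_adjMatrix [DecidableEq V] [Ring R] :
    Gᶜ.adjMatrix R = of 1 - 1 - G.adjMatrix R := by
  rw [← SimpleGraph.adjMatrix_completeGraph_eq_of_one_sub_one,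
    ← SimpleGraph.IsCompl.adjMatrix_add_adjMatrix_eq_adjMatrix_completeGraph R
      (isCompl_compl (x := G)), add_sub_cancel_left]

variable [Fintype V] [Semiring R]

lemma trace_of_one_mul_adjMatrix :
    ((of 1 : Matrix V V R) * G.adjMatrix R).trace = ∑ i, (G.degree i : R) := by
  simp [trace]

lemma trace_of_one_mul_of_one_mul_adjMatrix :
    ((of 1 : Matrix V V R) * ((of 1 : Matrix V V R) * G.adjMatrix R)).trace =
      Fintype.card V * ∑ i, (G.degree i : R) := by
  simp [trace, Matrix.mul_apply (N := _ * _), mul_sum]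

lemma trace_adjMatrix_mul_of_one_mul_adjMatrix :
    (G.adjMatrix R * (of 1 : Matrix V V R) * G.adjMatrix R).trace =
      ∑ i, (G.degree i : R) ^ 2 := by
  simp [trace, pow_two]

lemma trace_adjMatrix_sq [DecidableEq V] :
    (G.adjMatrix R ^ 2).trace = ∑ i, (G.degree i : R) := by
  simp only [pow_two, trace, diag_apply, SimpleGraph.adjMatrix_mul_self_apply_self]

end AdjacencyTraces

section LaplacianTraces

variable {V R : Type*} [Fintype V] [DecidableEq V] [CommRing R]
  (G : SimpleGraph V) [DecidableRel G.Adj]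

lemma trace_adjMatrix_cube :
    (G.adjMatrix R ^ 3).trace = 2 * numVSubgraphs Gᶜ + 2 * ∑ i, (G.degree i : R) ^ 2 -
      Fintype.card V * ∑ i, (G.degree i : R) := by
  set A := G.adjMatrix R with hA
  set J : Matrix V V R := of 1 with hJ
  have count : (2 * numVSubgraphs Gᶜ : R) = ((J - 1 - A) * (J - 1 - A) * A).trace := by
    rw [← trace_adjMatrix_mul_self_mul_compl, adjMatrix_compl_eq_of_one_sub_one_sub_adjMatrix]
    congr!
    exact compl_compl G
  have expand : (J - 1 - A) * (J - 1 - A) * A =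
      J * (J * A) - 2 • (J * A) - J * A * A - A * J * A + A + 2 • A ^ 2 + A ^ 3 := by
    noncomm_ring
  rw [count, expand]
  simp only [trace_add, trace_sub, trace_smul, trace_mul_cycle J A A]
  simp only [hA, hJ, trace_of_one_mul_of_one_mul_adjMatrix, trace_of_one_mul_adjMatrix,
    trace_adjMatrix_mul_of_one_mul_adjMatrix, trace_adjMatrix_sq, SimpleGraph.trace_adjMatrix]
  ring

lemma trace_lapMatrix : (G.lapMatrix R).trace = ∑ i, (G.degree i : R) := by
  simp [SimpleGraph.lapMatrix, SimpleGraph.degMatrix]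

lemma trace_lapMatrix_sq :
    (G.lapMatrix R ^ 2).trace = ∑ i, (G.degree i : R) ^ 2 + ∑ i, (G.degree i : R) := by
  rw [SimpleGraph.lapMatrix, trace_sub_sq, trace_adjMatrix_sq, SimpleGraph.degMatrix,
    trace_diagonal_mul, diagonal_pow]
  simp

lemma trace_lapMatrix_cube :
    (G.lapMatrix R ^ 3).trace = ∑ i, (G.degree i : R) ^ 3 + ∑ i, (G.degree i : R) ^ 2 +
      Fintype.card V * ∑ i, (G.degree i : R) - 2 * numVSubgraphs Gᶜ := by
  have trace_DDA : (G.degMatrix R ^ 2 * G.adjMatrix R).trace = 0 := by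
    simp [SimpleGraph.degMatrix, diagonal_pow, trace_diagonal_mul]
  have trace_DAA : (G.degMatrix R * G.adjMatrix R ^ 2).trace = ∑ i, (G.degree i : R) ^ 2 := by
    simp only [SimpleGraph.degMatrix, trace_diagonal_mul, pow_two,
      SimpleGraph.adjMatrix_mul_self_apply_self]
  rw [SimpleGraph.lapMatrix, trace_sub_cube, trace_DDA, trace_DAA, trace_adjMatrix_cube,
    SimpleGraph.degMatrix, diagonal_pow, trace_diagonal]
  simp only [Pi.pow_apply]
  ring

end LaplacianTraces

section PowerSums

variable {ι : Type*} [Fintype ι] {n : ℕ} {d e : ι → ℝ}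

lemma eventually_sum_comp_div_lt {g : ℝ → ℝ} {c : ℕ → ℝ}
    (hg : (fun u ↦ g u - ∑ k ∈ range (n + 1), c k * u ^ k) =o[𝓝 0] fun u ↦ u ^ n)
    (hc : 0 < c n) (heq : ∀ k < n, ∑ i, d i ^ k = ∑ i, e i ^ k)
    (hlt : ∑ i, e i ^ n < ∑ i, d i ^ n) :
    ∀ᶠ y in atTop, ∑ i, g (e i / y) < ∑ i, g (d i / y) := by
  let rem (a : ι → ℝ) (y : ℝ) : ℝ := ∑ i, (g (a i / y) - ∑ k ∈ range (n + 1), c k * (a i / y) ^ k)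
  have rem_isLittleO (a : ι → ℝ) : rem a =o[atTop] fun y : ℝ ↦ (1 / y) ^ n := by
    refine IsLittleO.fun_sum fun i _ ↦ ?_
    have := hg.comp_tendsto (tendsto_const_nhds.div_atTop (a := a i) tendsto_id)
    refine this.trans_isBigO (.of_bound (|a i| ^ n) (.of_forall fun y ↦ ?_))
    simp [div_eq_mul_inv, mul_pow]
  have main (y : ℝ) : ∑ i, g (d i / y) - ∑ i, g (e i / y) =
      c n * (∑ i, d i ^ n - ∑ i, e i ^ n) * (1 / y) ^ n + (rem d y - rem e y) := by
    have taylor (a : ι → ℝ) : ∑ i, g (a i / y) =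
        ∑ k ∈ range (n + 1), c k * (1 / y) ^ k * ∑ i, a i ^ k + rem a y := by
      simp only [rem, sum_sub_distrib, mul_sum]
      rw [sum_comm, add_comm]
      simp [mul_comm, mul_left_comm, div_eq_mul_inv, mul_pow]
    have low : ∑ k ∈ range n, c k * (1 / y) ^ k * ∑ i, d i ^ k =
        ∑ k ∈ range n, c k * (1 / y) ^ k * ∑ i, e i ^ k :=
      sum_congr rfl fun k hk ↦ by rw [heq k (mem_range.1 hk)]
    rw [taylor, taylor, sum_range_succ, sum_range_succ, low]
    ring
  have gap_pos : 0 < c n * (∑ i, d i ^ n - ∑ i, e i ^ n) := mul_pos hc (sub_pos.2 hlt)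
  filter_upwards [((rem_isLittleO d).sub (rem_isLittleO e)).def (half_pos gap_pos),
    eventually_gt_atTop 0] with y hrem hy
  have hpow : 0 < (1 / y) ^ n := by positivity
  rw [Real.norm_eq_abs, Real.norm_of_nonneg hpow.le] at hrem
  rw [← sub_pos, main]
  nlinarith [neg_abs_le (rem d y - rem e y)]

-- The summand for `k = 0` is zero because division by zero is.
lemma log_one_add_sub_sum_isLittleO (n : ℕ) :
    (fun u : ℝ ↦ Real.log (1 + u) - ∑ k ∈ range (n + 1), -(-1) ^ k / k * u ^ k)
      =o[𝓝 0] fun u ↦ u ^ n := by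
  refine IsBigO.trans_isLittleO (g := fun u : ℝ ↦ u ^ (n + 1)) ?_
    (isLittleO_pow_pow n.lt_succ_self)
  refine .of_bound 2 ?_
  filter_upwards [Metric.ball_mem_nhds (0 : ℝ) (half_pos one_pos)] with u hu
  rw [mem_ball_zero_iff, Real.norm_eq_abs] at hu
  have bound := Real.abs_log_sub_add_sum_range_le (x := -u) (by rw [abs_neg]; linarith) n
  have hsum : ∑ k ∈ range (n + 1), -(-1) ^ k / k * u ^ k =
      -∑ i ∈ range n, (-u) ^ (i + 1) / (i + 1) := by
    rw [sum_range_succ', ← sum_neg_distrib]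
    simp [neg_pow u, neg_div, div_mul_eq_mul_div]
  rw [hsum, sub_neg_eq_add, add_comm, Real.norm_eq_abs, norm_pow, Real.norm_eq_abs]
  rw [sub_neg_eq_add, abs_neg] at bound
  refine bound.trans ((div_le_iff₀ (by linarith)).2 ?_)
  nlinarith [pow_nonneg (abs_nonneg u) (n + 1)]

lemma neg_inv_one_add_sub_sum_isLittleO (n : ℕ) :
    (fun u : ℝ ↦ -(1 + u)⁻¹ - ∑ k ∈ range (n + 1), -(-1) ^ k * u ^ k)
      =o[𝓝 0] fun u ↦ u ^ n := by
  have geom : (fun u : ℝ ↦ (-1) ^ n * u ^ (n + 1) * (1 + u)⁻¹) =ᶠ[𝓝 0] fun u ↦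
      -(1 + u)⁻¹ - ∑ k ∈ range (n + 1), -(-1) ^ k * u ^ k := by
    filter_upwards [lt_mem_nhds (show (-1 : ℝ) < 0 by norm_num)] with u hu
    have hu' : 1 + u ≠ 0 := by linarith
    have := mul_neg_geom_sum (-u) (n + 1)
    rw [sub_neg_eq_add] at this
    simp only [neg_mul, sum_neg_distrib, ← mul_pow, one_mul]
    field_simp
    rw [this, neg_pow]
    ring
  refine (IsBigO.congr' ?_ geom .rfl).trans_isLittleO (isLittleO_pow_pow n.lt_succ_self)
  have inv_isBigO_one : (fun u : ℝ ↦ (1 + u)⁻¹) =O[𝓝 0] fun _ ↦ (1 : ℝ) :=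
    have : ContinuousAt (fun u : ℝ ↦ (1 + u)⁻¹) 0 := by fun_prop (disch := norm_num)
    this.tendsto.isBigO_one ℝ
  simpa using ((isBigO_refl (fun u : ℝ ↦ u ^ (n + 1)) (𝓝 0)).const_mul_left ((-1) ^ n)).mul
    inv_isBigO_one

lemma eventually_forall_add_pos {ι : Type*} [Finite ι] (a : ι → ℝ) :
    ∀ᶠ y in atTop, ∀ i, 0 < a i + y :=
  eventually_all.2 fun i ↦ (eventually_gt_atTop (-a i)).mono fun y hy ↦ by linarith

lemma eventually_prod_add_lt_prod_add (hn : Odd n) (heq : ∀ k < n, ∑ i, d i ^ k = ∑ i, e i ^ k)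
    (hlt : ∑ i, e i ^ n < ∑ i, d i ^ n) :
    ∀ᶠ y in atTop, ∏ i, (e i + y) < ∏ i, (d i + y) := by
  have hc : 0 < -(-1 : ℝ) ^ n / n := by
    rw [hn.neg_one_pow, neg_neg]
    exact div_pos one_pos (Nat.cast_pos.2 hn.pos)
  filter_upwards [eventually_sum_comp_div_lt (log_one_add_sub_sum_isLittleO n) hc heq hlt,
    eventually_gt_atTop 0, eventually_forall_add_pos d,
    eventually_forall_add_pos e] with y hlog hy hd he
  have sum_log (a : ι → ℝ) (ha : ∀ i, 0 < a i + y) :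
      ∑ i, Real.log (1 + a i / y) = Real.log (∏ i, (a i + y)) - Fintype.card ι * Real.log y := by
    rw [Real.log_prod fun i _ ↦ (ha i).ne', Fintype.card, ← nsmul_eq_mul, ← sum_const,
      ← sum_sub_distrib]
    refine sum_congr rfl fun i _ ↦ ?_
    rw [← Real.log_div (ha i).ne' hy.ne', add_div, div_self hy.ne', add_comm]
  rw [sum_log d hd, sum_log e he, sub_lt_sub_iff_right] at hlog
  exact (Real.log_lt_log_iff (prod_pos fun i _ ↦ he i) (prod_pos fun i _ ↦ hd i)).1 hlog

lemma eventually_sum_inv_add_lt_sum_inv_add (hn : Odd n)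
    (heq : ∀ k < n, ∑ i, d i ^ k = ∑ i, e i ^ k) (hlt : ∑ i, e i ^ n < ∑ i, d i ^ n) :
    ∀ᶠ y in atTop, ∑ i, (d i + y)⁻¹ < ∑ i, (e i + y)⁻¹ := by
  have hc : 0 < -(-1 : ℝ) ^ n := by rw [hn.neg_one_pow, neg_neg]; exact one_pos
  filter_upwards [eventually_sum_comp_div_lt (neg_inv_one_add_sub_sum_isLittleO n) hc heq hlt,
    eventually_gt_atTop 0] with y hinv hy
  have sum_inv (a : ι → ℝ) : ∑ i, -(1 + a i / y)⁻¹ = -(y * ∑ i, (a i + y)⁻¹) := by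
    rw [mul_sum, ← sum_neg_distrib]
    refine sum_congr rfl fun i _ ↦ ?_
    rw [one_add_div hy.ne', inv_div, div_eq_mul_inv, add_comm]
  rw [sum_inv, sum_inv, neg_lt_neg_iff] at hinv
  exact lt_of_mul_lt_mul_left hinv hy.le

end PowerSums

section Hermitian

variable {ι 𝕜 : Type*} [Fintype ι] [DecidableEq ι] [RCLike 𝕜]

lemma trace_cfc_eq_sum_eigenvalues {A : Matrix ι ι 𝕜} (hA : A.IsHermitian) (f : ℝ → ℝ) :
    (cfc f A).trace = ∑ i, (f (hA.eigenvalues i) : 𝕜) := by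
  rw [hA.cfc_eq, IsHermitian.cfc, Unitary.conjStarAlgAut_apply, trace_mul_comm, ← mul_assoc,
    Unitary.coe_star_mul_self, one_mul, trace_diagonal]
  rfl

lemma det_cfc_eq_prod_eigenvalues {A : Matrix ι ι 𝕜} (hA : A.IsHermitian) (f : ℝ → ℝ) :
    (cfc f A).det = ∏ i, (f (hA.eigenvalues i) : 𝕜) := by
  rw [hA.cfc_eq, IsHermitian.cfc, Unitary.conjStarAlgAut_apply, det_mul_comm, ← mul_assoc,
    Unitary.coe_star_mul_self, one_mul, det_diagonal]
  rfl

lemma trace_pow_eq_sum_eigenvalues_pow {A : Matrix ι ι 𝕜} (hA : A.IsHermitian) (k : ℕ) :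
    (A ^ k).trace = ∑ i, (hA.eigenvalues i : 𝕜) ^ k := by
  rw [← cfc_pow_id (R := ℝ) A k hA.isSelfAdjoint, trace_cfc_eq_sum_eigenvalues hA]
  push_cast
  rfl

lemma add_smul_one_eq_cfc {A : Matrix ι ι 𝕜} (hA : A.IsHermitian) (y : ℝ) :
    A + y • (1 : Matrix ι ι 𝕜) = cfc (fun x : ℝ ↦ x + y) A := by
  rw [cfc_add_const y (fun x ↦ x) A continuousOn_id hA.isSelfAdjoint, cfc_id' ℝ A hA.isSelfAdjoint,
    Algebra.algebraMap_eq_smul_one]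

lemma det_add_smul_one_eq_prod {A : Matrix ι ι 𝕜} (hA : A.IsHermitian) (y : ℝ) :
    (A + y • (1 : Matrix ι ι 𝕜)).det = ∏ i, ((hA.eigenvalues i : 𝕜) + y) := by
  rw [add_smul_one_eq_cfc hA, det_cfc_eq_prod_eigenvalues hA]
  push_cast
  rfl

lemma trace_inv_add_smul_one_eq_sum {A : Matrix ι ι 𝕜} (hA : A.IsHermitian) {y : ℝ}
    (hy : ∀ i, hA.eigenvalues i + y ≠ 0) :
    ((A + y • (1 : Matrix ι ι 𝕜))⁻¹).trace = ∑ i, ((hA.eigenvalues i : 𝕜) + y)⁻¹ := by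
  have spectrum_ne_zero : ∀ x ∈ spectrum ℝ A, x + y ≠ 0 := by
    rw [hA.spectrum_real_eq_range_eigenvalues]
    exact Set.forall_mem_range.2 hy
  rw [add_smul_one_eq_cfc hA, nonsing_inv_eq_ringInverse,
    ← cfc_inv _ A spectrum_ne_zero (by fun_prop) hA.isSelfAdjoint, trace_cfc_eq_sum_eigenvalues hA]
  push_cast
  rfl

variable {M N : Matrix ι ι ℝ} {n : ℕ}

lemma eventually_det_add_smul_one_lt (hM : M.IsHermitian) (hN : N.IsHermitian) (hn : Odd n)
    (heq : ∀ k < n, (M ^ k).trace = (N ^ k).trace) (hlt : (N ^ n).trace < (M ^ n).trace) :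
    ∀ᶠ y : ℝ in atTop,
      (N + y • (1 : Matrix ι ι ℝ)).det < (M + y • (1 : Matrix ι ι ℝ)).det := by
  simp only [trace_pow_eq_sum_eigenvalues_pow hM, trace_pow_eq_sum_eigenvalues_pow hN,
    RCLike.ofReal_real_eq_id, id] at heq hlt
  filter_upwards [eventually_prod_add_lt_prod_add hn heq hlt] with y hy
  rwa [det_add_smul_one_eq_prod hM, det_add_smul_one_eq_prod hN]

lemma eventually_trace_inv_add_smul_one_lt (hM : M.IsHermitian) (hN : N.IsHermitian) (hn : Odd n)
    (heq : ∀ k < n, (M ^ k).trace = (N ^ k).trace) (hlt : (N ^ n).trace < (M ^ n).trace) :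
    ∀ᶠ y : ℝ in atTop,
      ((M + y • (1 : Matrix ι ι ℝ))⁻¹).trace < ((N + y • (1 : Matrix ι ι ℝ))⁻¹).trace := by
  simp only [trace_pow_eq_sum_eigenvalues_pow hM, trace_pow_eq_sum_eigenvalues_pow hN,
    RCLike.ofReal_real_eq_id, id] at heq hlt
  filter_upwards [eventually_sum_inv_add_lt_sum_inv_add hn heq hlt,
    eventually_forall_add_pos hM.eigenvalues, eventually_forall_add_pos hN.eigenvalues]
    with y hy hMy hNy
  rwa [trace_inv_add_smul_one_eq_sum hM fun i ↦ (hMy i).ne',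
    trace_inv_add_smul_one_eq_sum hN fun i ↦ (hNy i).ne']

end Hermitian

section Comparison

variable {V R : Type*} [Fintype V] [DecidableEq V] [CommRing R] {G G' : SimpleGraph V}
  [DecidableRel G.Adj] [DecidableRel G'.Adj]

lemma trace_lapMatrix_pow_congr
    (hdeg : ∀ k < 3, ∑ i, (G.degree i : R) ^ k = ∑ i, (G'.degree i : R) ^ k) :
    ∀ k < 3, (G.lapMatrix R ^ k).trace = (G'.lapMatrix R ^ k).trace := by
  have hdeg₁ : ∑ i, (G.degree i : R) = ∑ i, (G'.degree i : R) := by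
    simpa only [pow_one] using hdeg 1 (by norm_num)
  intro k hk
  interval_cases k
  · rw [pow_zero, pow_zero]
  · rw [pow_one, pow_one, trace_lapMatrix, trace_lapMatrix, hdeg₁]
  · rw [trace_lapMatrix_sq, trace_lapMatrix_sq, hdeg₁, hdeg 2 (by norm_num)]

lemma trace_lapMatrix_cube_lt_iff [LinearOrder R] [IsStrictOrderedRing R]
    (hdeg : ∀ k ≤ 3, ∑ i, (G.degree i : R) ^ k = ∑ i, (G'.degree i : R) ^ k) :
    (G'.lapMatrix R ^ 3).trace < (G.lapMatrix R ^ 3).trace ↔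
      numVSubgraphs Gᶜ < numVSubgraphs G'ᶜ := by
  have hdeg₁ : ∑ i, (G.degree i : R) = ∑ i, (G'.degree i : R) := by
    simpa only [pow_one] using hdeg 1 (by norm_num)
  rw [trace_lapMatrix_cube, trace_lapMatrix_cube, hdeg₁, hdeg 2 (by norm_num), hdeg 3 le_rfl,
    sub_lt_sub_iff_left, mul_lt_mul_iff_right₀ two_pos, Nat.cast_lt]

end Comparison

theorem stmt_18_general {V : Type*} [Fintype V] [DecidableEq V] :
    ∃ y₀ : ℝ, ∀ y ≥ y₀, ∀ (G G' : SimpleGraph V) [DecidableRel G.Adj] [DecidableRel G'.Adj],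
      (∀ k ≤ 3, ∑ i, G.degree i ^ k = ∑ i, G'.degree i ^ k) →
      numVSubgraphs Gᶜ < numVSubgraphs G'ᶜ →
      Matrix.det (G'.lapMatrix ℝ + y • (1 : Matrix V V ℝ)) <
        Matrix.det (G.lapMatrix ℝ + y • (1 : Matrix V V ℝ)) ∧
      Matrix.trace ((G.lapMatrix ℝ + y • (1 : Matrix V V ℝ))⁻¹) <
        Matrix.trace ((G'.lapMatrix ℝ + y • (1 : Matrix V V ℝ))⁻¹) := by
  simp only [ge_iff_le, ← eventually_atTop, eventually_all]
  intro G G' _ _ hdeg hη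
  have hdeg_real : ∀ k ≤ 3, ∑ i, (G.degree i : ℝ) ^ k = ∑ i, (G'.degree i : ℝ) ^ k :=
    fun k hk ↦ by exact_mod_cast hdeg k hk
  have heq := trace_lapMatrix_pow_congr fun k hk ↦ hdeg_real k hk.le
  have hlt := (trace_lapMatrix_cube_lt_iff hdeg_real).2 hη
  have hodd : Odd 3 := by decide
  have hG := G.isHermitian_lapMatrix (R := ℝ)
  have hG' := G'.isHermitian_lapMatrix (R := ℝ)
  exact (eventually_det_add_smul_one_lt hG hG' hodd heq hlt).and
    (eventually_trace_inv_add_smul_one_lt hG hG' hodd heq hlt)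

theorem stmt_18 (v δ : ℕ) (hv : 2 ≤ v) (hδ : 1 ≤ δ) :
    ∃ x₀ : ℝ, 0 < x₀ ∧ ∀ x : ℝ, x₀ ≤ x →
      ∀ (G G' : SimpleGraph (Fin v)) [DecidableRel G.Adj] [DecidableRel G'.Adj],
        G.IsRegularOfDegree δ → G'.IsRegularOfDegree δ →
        numVSubgraphs Gᶜ < numVSubgraphs G'ᶜ →
        Matrix.det (G'.lapMatrix ℝ + ((v : ℝ) * x) • (1 : Matrix (Fin v) (Fin v) ℝ)) <
          Matrix.det (G.lapMatrix ℝ + ((v : ℝ) * x) • (1 : Matrix (Fin v) (Fin v) ℝ)) ∧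
        Matrix.trace ((G.lapMatrix ℝ + ((v : ℝ) * x) • (1 : Matrix (Fin v) (Fin v) ℝ))⁻¹) <
          Matrix.trace ((G'.lapMatrix ℝ + ((v : ℝ) * x) • (1 : Matrix (Fin v) (Fin v) ℝ))⁻¹) := by
  obtain ⟨y₀, hy₀⟩ := stmt_18_general (V := Fin v)
  refine ⟨max y₀ 1, by positivity, fun x hx G G' _ _ hG hG' hη ↦ ?_⟩
  obtain ⟨hx₀, hx₁⟩ := max_le_iff.1 hx
  have le_mul : x ≤ v * x :=
    le_mul_of_one_le_left (zero_le_one.trans hx₁) (by exact_mod_cast one_le_two.trans hv)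
  exact hy₀ _ (hx₀.trans le_mul) G G' (fun k _ ↦ by simp only [hG.degree_eq, hG'.degree_eq]) hη
end
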